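/- Let f : D → {0,1} be a partial function with D ⊆ [M]^n, and let φ be a certifying function for f. Then R_1(f_CS(φ)) = Õ(R(f) + R_0(φ)) and Q_1(f_CS(φ)) = Õ(Q(f) + Q_0(φ)). -/

import Mathlib

open scoped BigOperators ENNReal

namespace QC

/-! ### Inputs and partial functions -/

/-- An input assigns to each index `i` a symbol from the alphabet `Fin (α i)`. -/
abbrev Input (ι : Type) (α : ι → ℕ) := ∀ i : ι, Fin (α i)

/-- A (possibly partial) Boolean-valued query function; `none` means the input
is outside the promise/domain. -/
abbrev PartialFn (ι : Type) (α : ι → ℕ) := Input ι α → Option Bool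

/-- A total function has every input in its domain. -/
def TotalFn {ι : Type} {α : ι → ℕ} (f : PartialFn ι α) : Prop := ∀ x, f x ≠ none

/-- Classical truth value of a proposition, as a `Bool`. -/
noncomputable def ofProp (P : Prop) : Bool := @decide P (Classical.propDecidable P)

/-! ### Decision trees and classical query complexity -/

/-- Decision trees over index set `ι` with alphabets `α` and leaf labels `L`. -/
inductive DTree (ι : Type) (α : ι → ℕ) (L : Type) : Type
  | leaf : L → DTree ι α L
  | node : (i : ι) → (Fin (α i) → DTree ι α L) → DTree ι α L

namespace DTree

variable {ι : Type} {α : ι → ℕ} {L : Type}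

/-- Evaluate a decision tree on an input. -/
def eval : DTree ι α L → Input ι α → L
  | leaf b, _ => b
  | node i child, x => eval (child (x i)) x

/-- The number of queries the tree makes on a given input. -/
def cost : DTree ι α L → Input ι α → ℕ
  | leaf _, _ => 0
  | node i child, x => cost (child (x i)) x + 1

/-- The depth (worst-case number of queries) of a decision tree. -/
def depth : DTree ι α L → ℕ
  | leaf _ => 0
  | node _ child => (Finset.univ.sup fun a => depth (child a)) + 1

end DTree

variable {ι : Type} {α : ι → ℕ}

/-- Deterministic query complexity `D(f)`. -/
noncomputable def Dq (f : PartialFn ι α) : ℕ :=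
  sInf {d | ∃ T : DTree ι α (Option Bool), T.depth ≤ d ∧
    ∀ x b, f x = some b → T.eval x = some b}

/-- Bounded-error randomized query complexity `R(f)` (worst-case queries,
success probability at least 2/3 on every domain input). -/
noncomputable def Rq (f : PartialFn ι α) : ℕ :=
  sInf {d | ∃ μ : PMF (DTree ι α (Option Bool)),
    (∀ T ∈ μ.support, T.depth ≤ d) ∧
    ∀ x b, f x = some b → 2/3 ≤ μ.toOuterMeasure {T | T.eval x = some b}}

/-- Zero-error randomized query complexity `R₀(f)` (worst-case queries): the
algorithm never errs, and outputs `none` ("don't know") with probability at most 1/2. -/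
noncomputable def R0q (f : PartialFn ι α) : ℕ :=
  sInf {d | ∃ μ : PMF (DTree ι α (Option Bool)),
    (∀ T ∈ μ.support, T.depth ≤ d) ∧
    (∀ T ∈ μ.support, ∀ x b, f x = some b → T.eval x = some b ∨ T.eval x = none) ∧
    ∀ x b, f x = some b → μ.toOuterMeasure {T | T.eval x = none} ≤ 1/2}

/-- Zero-error randomized query complexity, measured by the worst-case *expected*
number of queries over domain inputs (value in `ℝ≥0∞`). -/
noncomputable def R0expq (f : PartialFn ι α) : ℝ≥0∞ :=
  sInf {c | ∃ μ : PMF (DTree ι α (Option Bool)),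
    (∀ T ∈ μ.support, ∀ x b, f x = some b → T.eval x = some b ∨ T.eval x = none) ∧
    (∀ x b, f x = some b → μ.toOuterMeasure {T | T.eval x = none} ≤ 1/2) ∧
    (∀ x b, f x = some b → ∑' T, μ T * (T.cost x : ℝ≥0∞) ≤ c)}

/-- One-sided-error randomized query complexity `R₁(f)`: accept every 1-input with
probability at least 2/3, and never accept a 0-input. -/
noncomputable def R1q (f : PartialFn ι α) : ℕ :=
  sInf {d | ∃ μ : PMF (DTree ι α (Option Bool)),
    (∀ T ∈ μ.support, T.depth ≤ d) ∧
    (∀ x, f x = some true → 2/3 ≤ μ.toOuterMeasure {T | T.eval x = some true}) ∧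
    (∀ x, f x = some false → ∀ T ∈ μ.support, T.eval x ≠ some true)}

/-! ### Quantum query complexity -/

/-- The index set of the state space of a quantum query algorithm:
a query register `Σ i, Fin (α i)` together with a workspace register `Fin W`. -/
abbrev QIdx (ι : Type) (α : ι → ℕ) (W : ℕ) := (Σ i : ι, Fin (α i)) × Fin W

variable [Fintype ι] [DecidableEq ι]

/-- The standard query oracle for input `x`: the permutation matrix sending the basis
vector `|i,a⟩|w⟩` to `|i, a + x i⟩|w⟩` (addition modulo `α i`). -/
noncomputable def oracleMatrix (W : ℕ) (x : Input ι α) :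
    Matrix (QIdx ι α W) (QIdx ι α W) ℂ :=
  Matrix.of fun j j' =>
    if j.2 = j'.2 ∧ j.1 = ⟨j'.1.1, j'.1.2 + x j'.1.1⟩ then 1 else 0

/-- The product `U_T · O · U_{T-1} · O ⋯ O · U_0` of unitaries interleaved with oracle
calls, defining a `T`-query quantum algorithm. -/
noncomputable def qProd {τ : Type} [Fintype τ] (U : ℕ → Matrix τ τ ℂ) (Ox : Matrix τ τ ℂ) :
    ℕ → Matrix τ τ ℂ
  | 0 => U 0
  | t + 1 => U (t + 1) * Ox * qProd U Ox t

/-- A quantum query algorithm: a number `T` of queries, a workspace size `W`,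
unitaries `U 0, …, U T`, a unit initial state, and a measurement assigning to each
basis state an output in `Option Bool` (`none` = "don't know"). -/
structure QAlg (ι : Type) [Fintype ι] [DecidableEq ι] (α : ι → ℕ) where
  T : ℕ
  W : ℕ
  U : ℕ → Matrix (QIdx ι α W) (QIdx ι α W) ℂ
  unitary : ∀ t, U t ∈ Matrix.unitaryGroup (QIdx ι α W) ℂ
  init : QIdx ι α W → ℂ
  init_norm : ∑ j, ‖init j‖ ^ 2 = 1
  out : QIdx ι α W → Option Bool

/-- The final state of a quantum algorithm on input `x`. -/
noncomputable def QAlg.finalState (A : QAlg ι α) (x : Input ι α) : QIdx ι α A.W → ℂ :=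
  (qProd A.U (oracleMatrix A.W x) A.T).mulVec A.init

/-- The probability that the algorithm outputs `v` on input `x`. -/
noncomputable def QAlg.outProb (A : QAlg ι α) (x : Input ι α) (v : Option Bool) : ℝ :=
  ∑ j, if A.out j = v then ‖A.finalState x j‖ ^ 2 else 0

/-- Bounded-error quantum query complexity `Q(f)`. -/
noncomputable def Qq (f : PartialFn ι α) : ℕ :=
  sInf {d | ∃ A : QAlg ι α, A.T ≤ d ∧
    ∀ x b, f x = some b → (2 : ℝ)/3 ≤ A.outProb x (some b)}

/-- Exact quantum query complexity `Q_E(f)`. -/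
noncomputable def QEq (f : PartialFn ι α) : ℕ :=
  sInf {d | ∃ A : QAlg ι α, A.T ≤ d ∧
    ∀ x b, f x = some b → A.outProb x (some b) = 1}

/-- One-sided-error quantum query complexity `Q₁(f)`. -/
noncomputable def Q1q (f : PartialFn ι α) : ℕ :=
  sInf {d | ∃ A : QAlg ι α, A.T ≤ d ∧
    (∀ x, f x = some true → (2 : ℝ)/3 ≤ A.outProb x (some true)) ∧
    (∀ x, f x = some false → A.outProb x (some true) = 0)}

/-- Zero-error quantum query complexity `Q₀(f)`: never wrong, outputs `none`
with probability at most 1/2. -/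
noncomputable def Q0q (f : PartialFn ι α) : ℕ :=
  sInf {d | ∃ A : QAlg ι α, A.T ≤ d ∧
    ∀ x b, f x = some b → A.outProb x (some !b) = 0 ∧ A.outProb x none ≤ 1/2}

/-! ### Certificate complexity -/

/-- A partial assignment `ρ` is consistent with an input `x`. -/
def Consistent (ρ : ∀ i : ι, Option (Fin (α i))) (x : Input ι α) : Prop :=
  ∀ i v, ρ i = some v → x i = v

/-- The number of fixed positions of a partial assignment. -/
noncomputable def certSize (ρ : ∀ i : ι, Option (Fin (α i))) : ℕ :=
  Nat.card {i // (ρ i).isSome}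

/-- The certificate complexity of `f` at input `x`: the least size of a partial
assignment consistent with `x` forcing the value `f x` on all domain inputs. -/
noncomputable def CxAt (f : PartialFn ι α) (x : Input ι α) : ℕ :=
  sInf {s | ∃ ρ, Consistent ρ x ∧ (∀ y, Consistent ρ y → f y = none ∨ f y = f x) ∧
    certSize ρ ≤ s}

/-- Certificate complexity `C(f)`. -/
noncomputable def Cq (f : PartialFn ι α) : ℕ :=
  sSup {s | ∃ x, f x ≠ none ∧ s = CxAt f x}

/-- One-certificate complexity `C¹(f)`. -/
noncomputable def C1q (f : PartialFn ι α) : ℕ :=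
  sSup {s | ∃ x, f x = some true ∧ s = CxAt f x}

/-! ### Polynomial degree -/

/-- Exact polynomial degree `deg(f)`: least degree of a real polynomial agreeing
with `f` (as a 0/1 function of the numerical values of the input symbols) on its domain. -/
noncomputable def degq (f : PartialFn ι α) : ℕ :=
  sInf {d | ∃ p : MvPolynomial ι ℝ, p.totalDegree ≤ d ∧
    ∀ x b, f x = some b →
      MvPolynomial.eval (fun i => ((x i : ℕ) : ℝ)) p = if b then 1 else 0}

/-- Approximate polynomial degree `adeg(f)`: least degree of a real polynomial
approximating `f` pointwise to error 1/3 on its domain. -/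
noncomputable def adegq (f : PartialFn ι α) : ℕ :=
  sInf {d | ∃ p : MvPolynomial ι ℝ, p.totalDegree ≤ d ∧
    ∀ x b, f x = some b →
      |MvPolynomial.eval (fun i => ((x i : ℕ) : ℝ)) p - if b then 1 else 0| ≤ 1/3}

end QC
/-! ### Certifying functions and cheat sheets -/

namespace QC

variable {ι : Type} {α : ι → ℕ}

/-- `φ` is a certifying function for the partial function `f`: it accepts `(x, y)`
only when `x` is in the domain of `f` and the first bit of `y` equals `f x`; every
domain input has some accepted certificate `y`; and the all-zeros `y` is never accepted. -/
def IsCertifying {k : ℕ} (hk : 0 < k) (f : PartialFn ι α)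
    (φ : Input ι α → (Fin k → Fin 2) → Bool) : Prop :=
  (∀ x y, f x = none → φ x y = false) ∧
  (∀ x y b, f x = some b → y ⟨0, hk⟩ ≠ (if b then 1 else 0) → φ x y = false) ∧
  (∀ x b, f x = some b → ∃ y, φ x y = true) ∧
  (∀ x, φ x (fun _ => 0) = false)

/-- The index set of the input to a certifying function, viewed as a query function:
the original input together with `k` certificate bits. -/
abbrev CertIdx (ι : Type) (k : ℕ) := ι ⊕ Fin k

/-- Alphabets for `CertIdx`. -/
def certAlphabet (α : ι → ℕ) (k : ℕ) : CertIdx ι k → ℕ := Sum.elim α fun _ => 2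

/-- A certifying function viewed as a total query function on input ⊕ certificate bits. -/
def certFn {k : ℕ} (φ : Input ι α → (Fin k → Fin 2) → Bool) :
    PartialFn (CertIdx ι k) (certAlphabet α k) :=
  fun z => some (φ (fun i => z (Sum.inl i)) (fun q => z (Sum.inr q)))

/-- The index set of the input to the cheat sheet version of a function: `c` copies of
the original input, followed by `2^c` cells each holding `c` certificate strings of `k` bits. -/
abbrev CSIdx (ι : Type) (c k : ℕ) := (Fin c × ι) ⊕ (Fin (2 ^ c) × Fin c × Fin k)

/-- Alphabets for `CSIdx`. -/
def csAlphabet (α : ι → ℕ) (c k : ℕ) : CSIdx ι c k → ℕ :=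
  Sum.elim (fun p => α p.2) fun _ => 2

/-- The `i`-th copy of the original input inside a cheat sheet input. -/
def csX {c k : ℕ} (z : Input (CSIdx ι c k) (csAlphabet α c k)) (i : Fin c) : Input ι α :=
  fun p => z (Sum.inl (i, p))

/-- The `i`-th certificate string in the `ℓ`-th cheat sheet cell. -/
def csY {c k : ℕ} (z : Input (CSIdx ι c k) (csAlphabet α c k)) (ℓ : Fin (2 ^ c))
    (i : Fin c) : Fin k → Fin 2 :=
  fun q => z (Sum.inr (ℓ, i, q))

/-- The number in `[2^c]` whose binary representation is the bit string `b`. -/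
def binToFin (c : ℕ) (b : Fin c → Bool) : Fin (2 ^ c) :=
  ⟨(∑ i, if b i then 2 ^ (i : ℕ) else 0) % 2 ^ c, Nat.mod_lt _ (by positivity)⟩

/-- The defining condition of the cheat sheet function: all `c` copies lie in the
domain of `f`, and the cell addressed by their `f`-values holds certificates
accepted by `φ` for each copy. -/
def CSCond {c k : ℕ} (f : PartialFn ι α) (φ : Input ι α → (Fin k → Fin 2) → Bool)
    (z : Input (CSIdx ι c k) (csAlphabet α c k)) : Prop :=
  ∃ bvec : Fin c → Bool, (∀ i, f (csX z i) = some (bvec i)) ∧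
    ∀ i, φ (csX z i) (csY z (binToFin c bvec) i) = true

/-- The cheat sheet version of `f` with respect to the certifying function `φ`,
with `c` copies of `f`. It is a total function. -/
noncomputable def cheatSheet (c : ℕ) {k : ℕ} (f : PartialFn ι α)
    (φ : Input ι α → (Fin k → Fin 2) → Bool) :
    PartialFn (CSIdx ι c k) (csAlphabet α c k) :=
  fun z => some (ofProp (CSCond f φ z))

/-! ### OR / AND compositions -/

/-- The `OR` function on `m` bits (alphabet `Fin 2`). -/
def orFn (m : ℕ) (z : Fin m → Fin 2) : Fin 2 := if ∃ j, z j = 1 then 1 else 0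

/-- The `AND` function on `m` bits (alphabet `Fin 2`). -/
def andFn (m : ℕ) (z : Fin m → Fin 2) : Fin 2 := if ∀ j, z j = 1 then 1 else 0

/-- The composition `f ∘ OR_m`. -/
def composeOr {n : ℕ} (f : PartialFn (Fin n) fun _ => 2) (m : ℕ) :
    PartialFn (Fin n × Fin m) (fun _ => 2) :=
  fun z => f fun i => orFn m fun j => z (i, j)

/-- The composition `f ∘ AND_m ∘ OR_m`. -/
def composeAndOr {n : ℕ} (f : PartialFn (Fin n) fun _ => 2) (m : ℕ) :
    PartialFn (Fin n × Fin m × Fin m) (fun _ => 2) :=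
  fun z => f fun i => andFn m fun j => orFn m fun l => z (i, j, l)

/-! ### k-SUM, Block k-sum, BKK and its recursive composition -/

/-- The `k`-SUM function on `n` numbers from `[q]`: is there a set of `k` of the
input numbers summing to `0` modulo `q`? -/
noncomputable def kSUMfn (n q k : ℕ) : PartialFn (Fin n) (fun _ => q) :=
  fun x => some (ofProp (∃ S : Finset (Fin n), S.card = k ∧
    (∑ i ∈ S, (x i : ℕ)) % q = 0))

/-- Number of ones in a block of bits. -/
def onesCount {B : ℕ} (z : Fin B → Fin 2) : ℕ := (Finset.univ.filter fun j => z j = 1).card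

/-- The number encoded in binary by a block of bits. -/
def blockVal {B : ℕ} (z : Fin B → Fin 2) : ℕ := ∑ j, if z j = 1 then 2 ^ (j : ℕ) else 0

/-- A block is balanced if it has an equal number of 0s and 1s. -/
def isBalanced {B : ℕ} (z : Fin B → Fin 2) : Prop := 2 * onesCount z = B

/-- Block `k`-sum on `nb` blocks of `B` bits each: value 1 iff there are `k` balanced
blocks whose encoded numbers sum to 0 (mod `2^B`) and every other block has at least
as many 1s as 0s. -/
noncomputable def blockKSumBool (nb B k : ℕ) (z : Fin nb × Fin B → Fin 2) : Bool :=
  ofProp (∃ S : Finset (Fin nb), S.card = k ∧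
    (∀ i ∈ S, isBalanced fun j => z (i, j)) ∧
    (∑ i ∈ S, blockVal fun j => z (i, j)) % 2 ^ B = 0 ∧
    ∀ i ∉ S, B ≤ 2 * onesCount fun j => z (i, j))

/-- The Boolean version of `k`-SUM on `m` numbers of `w` bits each (mod `2^w`). -/
noncomputable def kSumBool (m w k : ℕ) (z : Fin m × Fin w → Fin 2) : Bool :=
  ofProp (∃ S : Finset (Fin m), S.card = k ∧
    (∑ i ∈ S, blockVal fun j => z (i, j)) % 2 ^ w = 0)

/-- Block size of the outer Block `k`-sum in `BKK` on (roughly) `n` outer bits. -/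
def bkkB (n k : ℕ) : ℕ := 10 * k * Nat.log 2 n
/-- Number of blocks of the outer Block `k`-sum in `BKK`. -/
def bkkNB (n k : ℕ) : ℕ := n / bkkB n k
/-- Bits per number of the inner Boolean `k`-SUM in `BKK`. -/
def bkkW (n k : ℕ) : ℕ := k * Nat.log 2 n
/-- Number of numbers of the inner Boolean `k`-SUM in `BKK`. -/
def bkkM (n k : ℕ) : ℕ := n / bkkW n k

/-- The index set of the inputs of `BKK_{n²,k}` (one inner `k`-SUM input bit for
each outer Block `k`-sum input bit; roughly `n²` bits in total). -/
abbrev BKKIdx (n k : ℕ) := (Fin (bkkNB n k) × Fin (bkkB n k)) × (Fin (bkkM n k) × Fin (bkkW n k))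

/-- `BKK_{n²,k}`: Block `k`-sum composed with the Boolean version of `k`-SUM. -/
noncomputable def bkkBool (n k : ℕ) (z : BKKIdx n k → Fin 2) : Bool :=
  blockKSumBool (bkkNB n k) (bkkB n k) k fun ob =>
    if kSumBool (bkkM n k) (bkkW n k) k (fun p => z (ob, p)) then 1 else 0

/-- `BKK_{n²,k}` as a total query function. -/
noncomputable def BKKfn (n k : ℕ) : PartialFn (BKKIdx n k) (fun _ => 2) :=
  fun z => some (bkkBool n k z)

/-- The `d`-fold self-composition of a total Boolean function `g`: a depth-`d` tree
each of whose internal nodes is a copy of `g`; input bits are indexed by root-to-leaf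
paths `Fin d → I`. -/
noncomputable def iterFn {I : Type} (g : (I → Fin 2) → Bool) :
    (d : ℕ) → ((Fin d → I) → Fin 2) → Bool
  | 0, z => decide (z (fun i => i.elim0) = 1)
  | d + 1, z => g fun a => if iterFn g d (fun v => z (Fin.cons a v)) then 1 else 0

/-- The recursion depth used for `RecBKK`: `d = (4/25)·log n / log log n`. -/
def recD (n : ℕ) : ℕ := 4 * Nat.log 2 n / (25 * Nat.log 2 (Nat.log 2 n))

/-- The index set of the inputs of `RecBKK`. -/
abbrev RecIdx (n : ℕ) := Fin (recD n) → BKKIdx n (Nat.log 2 n)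

/-- `RecBKK`: the `recD n`-fold self-composition of `BKK` with `k = log n`. -/
noncomputable def RecBKKfn (n : ℕ) : PartialFn (RecIdx n) (fun _ => 2) :=
  fun z => some (iterFn (bkkBool n (Nat.log 2 n)) (recD n) z)

/-- The nominal input size `N = n^{2d}` of `RecBKK`. -/
def recN (n : ℕ) : ℕ := n ^ (2 * recD n)

end QC

/-!
Let `c = 10 ⌈log₂ D(f)⌉`. A one-sided-error algorithm for the cheat sheet function computes the `c`
values `f (xⁱ)`, each with error amplified to `O(1 / c)`, goes to the cell addressed by these bits,
and runs a zero-error algorithm for `φ` on every pair `(xⁱ, yⁱ)` of that cell, `O(log c)` times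
each. It accepts only if every pair has been certified and the cell contents agree with the address
bits. Accepting is then always justified, whatever the first stage did, because a pair accepted by
`φ` proves the value `f (xⁱ)` recorded in its first bit.

It remains to see that `c` is logarithmic in the cost of `φ`. A certificate for `φ (x, y) = 1`
restricts to a certificate for `f x`, so `D(f)` is at most the square of the certificate complexity
of `φ`. The latter is at most `R₀(φ)` for decision trees, and at most the square of the block
sensitivity, which is `O(Q₀(φ)²)` by the hybrid argument, for quantum algorithms.

Both halves are instances of one argument about an abstract query model, a family of realizable
output distributions closed under composition.
-/

namespace QC

/-! ### Probability mass functions -/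

section PMF

variable {β γ : Type*}

/-- The probability that a sample of `p` differs from `b`. -/
noncomputable def errProb (p : PMF β) (b : β) : ℝ≥0∞ := p.toOuterMeasure {b}ᶜ

theorem apply_add_errProb (p : PMF β) (b : β) : p b + errProb p b = 1 := by
  let _ : MeasurableSpace β := ⊤
  have h := MeasureTheory.prob_add_prob_compl (μ := p.toMeasure) (MeasurableSet.singleton b)
  rwa [p.toMeasure_apply_eq_toOuterMeasure, p.toMeasure_apply_eq_toOuterMeasure,
    p.toOuterMeasure_apply_singleton] at h

theorem errProb_le_iff {p : PMF β} {b : β} {ε δ : ℝ≥0∞} (h : ε + δ = 1) :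
    errProb p b ≤ ε ↔ δ ≤ p b := by
  have hε : ε ≠ ∞ := fun h' => by simp [h'] at h
  have hδ : δ ≠ ∞ := fun h' => by simp [h'] at h
  rw [← apply_add_errProb p b] at h
  constructor <;> intro h'
  · by_contra! hlt
    exact (ENNReal.add_lt_add_of_le_of_lt (ne_top_of_le_ne_top hε h') h' hlt).ne' (by
      rw [h, add_comm])
  · by_contra! hlt
    exact (ENNReal.add_lt_add_of_lt_of_le hδ hlt h').ne (by rw [h, add_comm])

theorem errProb_le_one (p : PMF β) (b : β) : errProb p b ≤ 1 := by
  rw [← apply_add_errProb p b]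
  exact le_add_self

theorem errProb_map_le (p : PMF β) (g : β → γ) (b : β) : errProb (p.map g) (g b) ≤ errProb p b := by
  rw [errProb, PMF.toOuterMeasure_map_apply]
  exact MeasureTheory.measure_mono fun a ha hab => ha (congrArg g hab)

theorem errProb_bind_le_of_forall_ne {p : PMF β} {f : β → PMF γ} {b : β} {c : γ} {δ : ℝ≥0∞}
    (h : ∀ a ≠ b, errProb (f a) c ≤ δ) :
    errProb (p.bind f) c ≤ p b * errProb (f b) c + errProb p b * δ := by
  classical
  have hterm : ∀ a, p a * errProb (f a) c ≤
      (if a = b then p b * errProb (f b) c else 0) + ({b}ᶜ : Set β).indicator p a * δ := fun a => by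
    by_cases hab : a = b
    · simp [hab]
    · simpa [hab] using mul_le_mul_right (h a hab) (p a)
  calc errProb (p.bind f) c = ∑' a, p a * errProb (f a) c := p.toOuterMeasure_bind_apply f _
    _ ≤ ∑' a, ((if a = b then p b * errProb (f b) c else 0) + ({b}ᶜ : Set β).indicator p a * δ) :=
      ENNReal.tsum_le_tsum hterm
    _ = p b * errProb (f b) c + errProb p b * δ := by
      rw [ENNReal.tsum_add, tsum_ite_eq, ENNReal.tsum_mul_right, errProb.eq_1 p,
        PMF.toOuterMeasure_apply]

theorem errProb_bind_le (p : PMF β) (f : β → PMF γ) (b : β) (c : γ) :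
    errProb (p.bind f) c ≤ errProb p b + errProb (f b) c :=
  calc errProb (p.bind f) c ≤ p b * errProb (f b) c + errProb p b * 1 :=
      errProb_bind_le_of_forall_ne fun a _ => errProb_le_one (f a) c
    _ ≤ errProb p b + errProb (f b) c := by
      rw [mul_one, add_comm]
      gcongr
      exact mul_le_of_le_one_left' (p.coe_le_one b)

@[simp]
theorem errProb_pure_self (b : β) : errProb (PMF.pure b) b = 0 := by
  simp [errProb, PMF.toOuterMeasure_pure_apply]

theorem errProb_pi_le {κ : Type*} [Fintype κ] (p : PMF (κ → β)) (w : κ → β) :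
    errProb p w ≤ ∑ i, errProb (p.map (· i)) (w i) := by
  have h : ({w}ᶜ : Set (κ → β)) = ⋃ i, (· i) ⁻¹' {w i}ᶜ := by
    ext v
    simp [Function.ne_iff]
  simp only [errProb, PMF.toOuterMeasure_map_apply, h]
  exact MeasureTheory.measure_iUnion_fintype_le _ _

theorem exists_pmf_pi_map_eq {κ : Type*} [Finite κ] (p : κ → PMF β) :
    ∃ q : PMF (κ → β), ∀ i, q.map (· i) = p i := by
  classical
  have := Fintype.ofFinite κ
  suffices h : ∀ s : Finset κ, ∃ q : PMF (κ → β), ∀ i ∈ s, q.map (· i) = p i by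
    obtain ⟨q, hq⟩ := h Finset.univ
    exact ⟨q, fun i => hq i (Finset.mem_univ i)⟩
  intro s
  induction s using Finset.induction_on with
  | empty =>
    choose b _ using fun i => (p i).support_nonempty
    exact ⟨PMF.pure b, by simp⟩
  | insert j s hj ih =>
    obtain ⟨q, hq⟩ := ih
    refine ⟨q.bind fun g => (p j).map (Function.update g j), fun i hi => ?_⟩
    simp only [PMF.map_bind, PMF.map_comp, Function.comp_def]
    obtain rfl | hij := eq_or_ne i j
    · simp [PMF.bind_const, ← Function.id_def, PMF.map_id]
    · simp only [Function.update_of_ne hij]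
      rw [← hq i ((Finset.mem_insert.1 hi).resolve_left hij)]
      simp [← PMF.bind_pure_comp, Function.comp_def]

end PMF

/-! ### Amplification -/

section Amplification

variable {L : Type*} [DecidableEq L]

/-- Two samples of `p` if they agree, and otherwise a third one as a tie-breaker. -/
noncomputable def bestOfThree (p : PMF L) : PMF L :=
  p.bind fun a => p.bind fun b => if a = b then PMF.pure a else p

theorem cubic_le_of_le_third {u v : ℝ≥0∞} (hu : u ≤ 1 / 3) (huv : v + u = 1) :
    v * (u * u) + u * (v * u + u) ≤ 7 / 9 * u := by
  lift u to NNReal using ne_top_of_le_ne_top (by simp) hu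
  lift v to NNReal using ne_top_of_le_ne_top ENNReal.one_ne_top (huv ▸ le_self_add)
  have h9 : (7 / 9 : ℝ≥0∞) = ((7 / 9 : NNReal) : ℝ≥0∞) := by simp
  have h3 : (1 / 3 : ℝ≥0∞) = ((1 / 3 : NNReal) : ℝ≥0∞) := by simp
  rw [h9]
  rw [h3] at hu
  norm_cast at hu huv ⊢
  rw [← NNReal.coe_le_coe] at hu ⊢
  rw [← NNReal.coe_inj] at huv
  push_cast at hu huv ⊢
  obtain hv : (v : ℝ) = 1 - u := by linarith
  rw [hv]
  have h : 0 ≤ (u : ℝ) * (1 / 3 - u) * (7 / 6 - u) :=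
    mul_nonneg (mul_nonneg u.coe_nonneg (by linarith)) (by linarith)
  linarith

theorem errProb_bestOfThree_le {p : PMF L} {l : L} (h : errProb p l ≤ 1 / 3) :
    errProb (bestOfThree p) l ≤ 7 / 9 * errProb p l := by
  have hagree : errProb (p.bind fun b => if l = b then PMF.pure l else p) l ≤
      errProb p l * errProb p l := by
    have hdiffer : ∀ b ≠ l, errProb (if l = b then PMF.pure l else p) l ≤ errProb p l :=
      fun b hb => by rw [if_neg hb.symm]
    simpa using errProb_bind_le_of_forall_ne (p := p) hdiffer
  have hwrong : ∀ a ≠ l, errProb (p.bind fun b => if a = b then PMF.pure a else p) l ≤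
      p l * errProb p l + errProb p l := fun a ha => by
    simpa [ha] using errProb_bind_le_of_forall_ne (p := p) (b := l)
      (f := fun b => if a = b then PMF.pure a else p) fun b _ => errProb_le_one _ l
  refine (errProb_bind_le_of_forall_ne hwrong).trans ((add_le_add_left
    (mul_le_mul_right hagree (p l)) _).trans ?_)
  exact cubic_le_of_le_third h (apply_add_errProb p l)

theorem errProb_iterate_bestOfThree_le {p : PMF L} {l : L} (h : errProb p l ≤ 1 / 3) (n : ℕ) :
    errProb (bestOfThree^[n] p) l ≤ (7 / 9) ^ n * (1 / 3) := by
  induction n with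
  | zero => simpa using h
  | succ n ih =>
    rw [Function.iterate_succ_apply', pow_succ', mul_assoc]
    have h79 : (7 / 9 : ℝ≥0∞) ≤ 1 := ENNReal.div_le_of_le_mul (by norm_num)
    refine (errProb_bestOfThree_le (ih.trans ?_)).trans (mul_le_mul_right ih (7 / 9))
    exact mul_le_of_le_one_left' (pow_le_one' h79 n)

theorem errProb_iterate_bestOfThree_le_half_pow {p : PMF L} {l : L} (h : errProb p l ≤ 1 / 3)
    (m : ℕ) : errProb (bestOfThree^[3 * m] p) l ≤ (1 / 2) ^ m := by
  have h79 : (7 / 9 : ℝ≥0∞) ^ 3 ≤ 1 / 2 := by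
    have h9 : (7 / 9 : ℝ≥0∞) = ((7 / 9 : NNReal) : ℝ≥0∞) := by simp
    have h2 : (1 / 2 : ℝ≥0∞) = ((1 / 2 : NNReal) : ℝ≥0∞) := by simp
    rw [h9, h2]
    norm_cast
    rw [← NNReal.coe_le_coe]
    norm_num
  calc errProb (bestOfThree^[3 * m] p) l
      ≤ (7 / 9) ^ (3 * m) * (1 / 3) := errProb_iterate_bestOfThree_le h (3 * m)
    _ ≤ (7 / 9) ^ (3 * m) * 1 := by gcongr; exact ENNReal.div_le_of_le_mul (by norm_num)
    _ ≤ (1 / 2) ^ m := by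
      rw [mul_one, pow_mul]
      exact pow_le_pow_left' h79 m

/-- Whether `l` occurs among `r` independent samples of `p`. -/
noncomputable def occurs (p : PMF L) (l : L) : ℕ → PMF Bool
  | 0 => PMF.pure false
  | r + 1 => p.bind fun a => if a = l then PMF.pure true else occurs p l r

theorem errProb_occurs_le (p : PMF L) (l : L) (r : ℕ) :
    errProb (occurs p l r) true ≤ errProb p l ^ r := by
  induction r with
  | zero => rw [pow_zero]; exact errProb_le_one _ _
  | succ r ih =>
    have hmiss : ∀ a ≠ l, errProb (if a = l then PMF.pure true else occurs p l r) true ≤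
        errProb p l ^ r := fun a ha => by rwa [if_neg ha]
    simpa [occurs, pow_succ'] using errProb_bind_le_of_forall_ne (p := p) hmiss

theorem mem_support_of_occurs {p : PMF L} {l : L} {r : ℕ} (h : true ∈ (occurs p l r).support) :
    l ∈ p.support := by
  induction r with
  | zero => simp [occurs] at h
  | succ r ih =>
    obtain ⟨a, ha, h⟩ := (PMF.mem_support_bind_iff _ _ _).1 h
    split_ifs at h with hal
    · exact hal ▸ ha
    · exact ih h

end Amplification

/-- A model of query algorithms with outputs in an arbitrary type: `Realizes T p` says that some
`T`-query algorithm has output distribution `p x` on every input `x`. Randomized and quantum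
algorithms are the two instances. -/
structure QueryModel where
  Realizes : ∀ {ι : Type} {α : ι → ℕ} {L : Type}, ℕ → (Input ι α → PMF L) → Prop
  pure : ∀ {ι : Type} {α : ι → ℕ} {L : Type} (l : L),
    Realizes 0 fun _ : Input ι α => PMF.pure l
  query : ∀ {ι : Type} {α : ι → ℕ} [Nonempty (Input ι α)] (i : ι),
    Realizes 1 fun x : Input ι α => PMF.pure (x i)
  bind : ∀ {ι : Type} {α : ι → ℕ} {L L' : Type} [Finite L] {S T : ℕ} {p : Input ι α → PMF L}
    {q : L → Input ι α → PMF L'}, Realizes S p → (∀ l, Realizes T (q l)) →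
    Realizes (S + T) fun x => (p x).bind fun l => q l x
  pullback : ∀ {ι κ : Type} {α : ι → ℕ} {L : Type} (σ : κ → ι) {T : ℕ}
    {p : Input κ (fun j => α (σ j)) → PMF L}, Realizes T p →
    Realizes T fun x : Input ι α => p fun j => x (σ j)

namespace QueryModel

variable {𝓜 : QueryModel} {ι κ : Type} {α : ι → ℕ} {β : κ → ℕ} {L L' : Type} [Finite L] {S T : ℕ}
  {p : Input ι α → PMF L}

theorem Realizes.map (hp : 𝓜.Realizes T p) (g : L → L') :
    𝓜.Realizes T fun x => (p x).map g :=
  𝓜.bind hp fun l => 𝓜.pure (g l)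

-- Running an algorithm and ignoring its output pads a constant answer to any attained cost.
theorem Realizes.const (hp : 𝓜.Realizes T p) (l : L') :
    𝓜.Realizes T fun _ : Input ι α => PMF.pure l := by
  have h : ∀ x, (p x).map (fun _ => l) = PMF.pure l := fun x => PMF.map_const (p x) l
  simpa only [h] using hp.map fun _ => l

omit [Finite L] in
theorem Realizes.pullback_cast {p : Input κ β → PMF L} (hp : 𝓜.Realizes T p) (σ : κ → ι)
    (h : ∀ j, α (σ j) = β j) :
    𝓜.Realizes T fun x : Input ι α => p fun j => Fin.cast (h j) (x (σ j)) := by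
  obtain rfl : β = fun j => α (σ j) := funext fun j => (h j).symm
  exact 𝓜.pullback σ hp

theorem exists_realizes_pi {m : ℕ} {p : Fin m → Input ι α → PMF L}
    (hp : ∀ i, 𝓜.Realizes T (p i)) :
    ∃ q : Input ι α → PMF (Fin m → L), 𝓜.Realizes (m * T) q ∧
      ∀ x i, (q x).map (· i) = p i x := by
  induction m with
  | zero => exact ⟨_, by simpa using 𝓜.pure Fin.elim0, fun _ i => i.elim0⟩
  | succ m ih =>
    obtain ⟨q, hq, hqp⟩ := ih fun i => hp i.succ
    refine ⟨_, by
      simpa [add_mul, add_comm] using 𝓜.bind (hp 0) fun l =>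
        hq.map fun w => (Fin.cons l w : Fin (m + 1) → L),
      fun x i => ?_⟩
    simp only [PMF.map_bind, PMF.map_comp, Function.comp_def]
    refine Fin.cases ?_ (fun i => ?_) i
    · have h : ∀ a : L, (q x).map (fun _ => a) = PMF.pure a := PMF.map_const (q x)
      simp [h]
    · simp [hqp, PMF.bind_const]

theorem exists_realizes_pure [Finite ι] [Nonempty (Input ι α)] (g : Input ι α → L') :
    ∃ T, 𝓜.Realizes T fun x => PMF.pure (g x) := by
  classical
  have := Fintype.ofFinite ι
  suffices h : ∀ (s : Finset ι) (g : Input ι α → L'), DependsOn g s →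
      𝓜.Realizes s.card fun x => PMF.pure (g x) from
    ⟨_, h Finset.univ g fun x y hxy => congrArg g (funext fun i => hxy i (by simp))⟩
  intro s
  induction s using Finset.induction_on with
  | empty =>
    intro g hg
    obtain ⟨x₀⟩ := ‹Nonempty (Input ι α)›
    have hconst : ∀ x, g x = g x₀ := fun x => hg fun i hi => by simp at hi
    simpa [hconst] using 𝓜.pure (g x₀)
  | insert i s hi ih =>
    intro g hg
    have hrec := 𝓜.bind (𝓜.query i) fun a => ih (fun x => g (Function.update x i a))
      fun x y hxy => hg fun j hj => by
        obtain rfl | hji := eq_or_ne j i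
        · simp
        · simpa [hji] using hxy j ((Finset.mem_insert.1 hj).resolve_left hji)
    simpa [Finset.card_insert_of_notMem hi, add_comm] using hrec

variable [DecidableEq L]

theorem Realizes.iterate_bestOfThree (hp : 𝓜.Realizes T p) (n : ℕ) :
    𝓜.Realizes (3 ^ n * T) fun x => bestOfThree^[n] (p x) := by
  induction n with
  | zero => simpa using hp
  | succ n ih =>
    have h := 𝓜.bind ih fun a => 𝓜.bind ih fun b =>
      (show 𝓜.Realizes (3 ^ n * T) fun x => if a = b then PMF.pure a else bestOfThree^[n] (p x) by
        split_ifs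
        exacts [ih.const a, ih])
    simp only [Function.iterate_succ_apply']
    convert h using 1
    · ring
    · rfl

theorem Realizes.occurs (hp : 𝓜.Realizes T p) (l : L) (r : ℕ) :
    𝓜.Realizes (r * T) fun x => occurs (p x) l r := by
  induction r with
  | zero => simpa [QC.occurs] using 𝓜.pure false
  | succ r ih =>
    rw [add_mul, one_mul, add_comm]
    refine 𝓜.bind hp fun a => ?_
    split_ifs
    exacts [ih.const true, ih]

end QueryModel

/-! ### The cheat sheet algorithm -/

section ErrorNotions

variable {ι : Type} {α : ι → ℕ}

/-- The output distributions `p` compute `f` with bounded error, as in `Rq` and `Qq`. -/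
def BoundedError (f : PartialFn ι α) (p : Input ι α → PMF (Option Bool)) : Prop :=
  ∀ x b, f x = some b → errProb (p x) (some b) ≤ 1 / 3

/-- The output distributions `p` compute `f` with zero error, as in `R0q` and `Q0q`. -/
def ZeroError (f : PartialFn ι α) (p : Input ι α → PMF (Option Bool)) : Prop :=
  ∀ x b, f x = some b → some (!b) ∉ (p x).support ∧ p x none ≤ 1 / 2

/-- The output distributions `p` compute `f` with one-sided error, as in `R1q` and `Q1q`. -/
def OneSidedError (f : PartialFn ι α) (p : Input ι α → PMF (Option Bool)) : Prop :=
  (∀ x, f x = some true → errProb (p x) (some true) ≤ 1 / 3) ∧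
    ∀ x, f x = some false → some true ∉ (p x).support

variable {f : PartialFn ι α} {p : Input ι α → PMF (Option Bool)}

theorem ZeroError.errProb_le_half (hp : ZeroError f p) {x : Input ι α} {b : Bool}
    (h : f x = some b) : errProb (p x) (some b) ≤ 1 / 2 := by
  obtain ⟨hnot, hnone⟩ := hp x b h
  refine le_trans ?_ hnone
  rw [← (p x).toOuterMeasure_apply_singleton]
  refine (p x).toOuterMeasure_mono ?_
  rintro (_ | a) ⟨hne, hmem⟩
  · rfl
  · refine absurd hmem ?_
    rwa [show a = !b by simpa [Bool.eq_not_iff] using hne]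

end ErrorNotions

section CheatSheet

variable {ι : Type} {α : ι → ℕ} {c k : ℕ} {f : PartialFn ι α}
  {φ : Input ι α → (Fin k → Fin 2) → Bool}

theorem IsCertifying.apply_eq_some_iff {hk : 0 < k} (hφ : IsCertifying hk f φ) {x : Input ι α}
    {y : Fin k → Fin 2} (h : φ x y = true) (b : Bool) :
    f x = some b ↔ y ⟨0, hk⟩ = if b then 1 else 0 := by
  obtain ⟨hdom, hbit, -, -⟩ := hφ
  have hval : ∀ a, f x = some a → y ⟨0, hk⟩ = if a then 1 else 0 := fun a ha => by
    by_contra hne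
    simp [hbit x y a ha hne] at h
  refine ⟨hval b, fun hb => ?_⟩
  cases hf : f x with
  | none => simp [hdom x y hf] at h
  | some a =>
    have ha := hval a hf
    rw [hb] at ha
    revert ha
    cases a <;> cases b <;> simp

theorem cheatSheet_eq_some_true_iff (z : Input (CSIdx ι c k) (csAlphabet α c k)) :
    cheatSheet c f φ z = some true ↔ CSCond f φ z := by
  simp [cheatSheet, ofProp]

/-- The input to `certFn` made up of an input `x` and a certificate `y`. -/
def certInput (x : Input ι α) (y : Fin k → Fin 2) : Input (CertIdx ι k) (certAlphabet α k) :=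
  fun j => Sum.rec (motive := fun j => Fin (certAlphabet α k j)) x y j

namespace QueryModel

variable {𝓜 : QueryModel} {S T : ℕ}

theorem realizes_occurs_and_firstBit {hk : 0 < k}
    {q : Input (CertIdx ι k) (certAlphabet α k) → PMF (Option Bool)} (hq : 𝓜.Realizes T q)
    [Nonempty (Input (CSIdx ι c k) (csAlphabet α c k))] (r : ℕ) (ℓ : Fin (2 ^ c)) (i : Fin c)
    (b : Bool) :
    𝓜.Realizes (1 + r * T) fun z : Input (CSIdx ι c k) (csAlphabet α c k) =>
      (occurs (q (certInput (csX z i) (csY z ℓ i))) (some true) r).map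
        (· && csY z ℓ i ⟨0, hk⟩ == if b then 1 else 0) := by
  let σ : CertIdx ι k → CSIdx ι c k := Sum.elim (fun j => Sum.inl (i, j)) fun j => Sum.inr (ℓ, i, j)
  have hα : ∀ j, csAlphabet α c k (σ j) = certAlphabet α k j := by rintro (j | j) <;> rfl
  have hrun := (hq.pullback_cast σ hα).occurs (some true) r
  have hinput : ∀ z : Input (CSIdx ι c k) (csAlphabet α c k),
      (fun j => Fin.cast (hα j) (z (σ j))) = certInput (csX z i) (csY z ℓ i) := fun z => by
    funext j
    rcases j with j | j <;> rfl
  simp only [hinput] at hrun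
  let accept : Fin 2 → Bool → Bool := fun a t => t && a == if b then 1 else 0
  have hbind := 𝓜.bind (𝓜.query (Sum.inr (ℓ, i, ⟨0, hk⟩))) fun a => hrun.map (accept a)
  simp only [PMF.pure_bind] at hbind
  exact hbind

theorem exists_certificate_verifier {hk : 0 < k} (hφ : IsCertifying hk f φ)
    {q : Input (CertIdx ι k) (certAlphabet α k) → PMF (Option Bool)} (hq : 𝓜.Realizes T q)
    (hqφ : ZeroError (certFn φ) q)
    [Nonempty (Input (CSIdx ι c k) (csAlphabet α c k))] (r : ℕ) (ℓ : Fin (2 ^ c)) (i : Fin c)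
    (b : Bool) :
    ∃ v : Input (CSIdx ι c k) (csAlphabet α c k) → PMF Bool, 𝓜.Realizes (1 + r * T) v ∧
      (∀ z, f (csX z i) = some b → φ (csX z i) (csY z ℓ i) = true →
        errProb (v z) true ≤ (1 / 2) ^ r) ∧
      ∀ z, true ∈ (v z).support → f (csX z i) = some b ∧ φ (csX z i) (csY z ℓ i) = true := by
  refine ⟨_, realizes_occurs_and_firstBit (hk := hk) hq r ℓ i b, fun z hf hz => ?_,
    fun z hv => ?_⟩
  · have hbit := (hφ.apply_eq_some_iff hz b).1 hf
    have h := errProb_map_le (occurs (q (certInput (csX z i) (csY z ℓ i))) (some true) r)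
      (· && csY z ℓ i ⟨0, hk⟩ == if b then 1 else 0) true
    simp only [hbit, beq_self_eq_true, Bool.and_true] at h ⊢
    refine h.trans ((errProb_occurs_le _ _ r).trans (pow_le_pow_left' ?_ r))
    exact hqφ.errProb_le_half (congrArg some hz)
  · obtain ⟨t, ht, hand⟩ := (PMF.mem_support_map_iff _ _ _).1 hv
    obtain ⟨rfl, hbit⟩ := (Bool.and_eq_true _ _).mp hand
    have hz : φ (csX z i) (csY z ℓ i) = true := by
      by_contra hne
      exact (hqφ _ false (congrArg some (Bool.eq_false_iff.2 hne))).1 (mem_support_of_occurs ht)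
    exact ⟨(hφ.apply_eq_some_iff hz b).2 (eq_of_beq hbit), hz⟩

theorem exists_cell_verifier {hk : 0 < k} (hφ : IsCertifying hk f φ)
    {q : Input (CertIdx ι k) (certAlphabet α k) → PMF (Option Bool)} (hq : 𝓜.Realizes T q)
    (hqφ : ZeroError (certFn φ) q)
    [Nonempty (Input (CSIdx ι c k) (csAlphabet α c k))] (r : ℕ) (bvec : Fin c → Bool) :
    ∃ v : Input (CSIdx ι c k) (csAlphabet α c k) → PMF (Option Bool),
      𝓜.Realizes (c * (1 + r * T)) v ∧
      (∀ z, (∀ i, f (csX z i) = some (bvec i)) →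
        (∀ i, φ (csX z i) (csY z (binToFin c bvec) i) = true) →
        errProb (v z) (some true) ≤ c * (1 / 2) ^ r) ∧
      ∀ z, some true ∈ (v z).support → CSCond f φ z := by
  choose v hv hcomplete hsound using fun i =>
    exists_certificate_verifier hφ hq hqφ r (binToFin c bvec) i (bvec i)
  obtain ⟨w, hw, hwv⟩ := exists_realizes_pi hv
  let allTrue : (Fin c → Bool) → Option Bool := fun t => some (decide (∀ i, t i = true))
  have hall : ∀ t, allTrue t = some true ↔ ∀ i, t i = true := by simp [allTrue]
  refine ⟨_, hw.map allTrue, fun z hf hz => ?_, fun z hz => ?_⟩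
  · calc errProb ((w z).map allTrue) (some true)
        ≤ errProb (w z) (fun _ => true) := by
          rw [← (hall fun _ => true).2 fun _ => rfl]
          exact errProb_map_le _ _ _
      _ ≤ ∑ i, errProb ((w z).map (· i)) true := errProb_pi_le _ _
      _ ≤ ∑ _i : Fin c, (1 / 2) ^ r := Finset.sum_le_sum fun i _ => by
          rw [hwv]
          exact hcomplete i z (hf i) (hz i)
      _ = c * (1 / 2) ^ r := by simp
  · obtain ⟨t, ht, htrue⟩ := (PMF.mem_support_map_iff _ _ _).1 hz
    have hmem : ∀ i, true ∈ (v i z).support := fun i => by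
      rw [← hwv]
      exact (PMF.mem_support_map_iff _ _ _).2 ⟨t, ht, (hall t).1 htrue i⟩
    exact ⟨bvec, fun i => (hsound i z (hmem i)).1, fun i => (hsound i z (hmem i)).2⟩

theorem exists_address_algorithm {p : Input ι α → PMF (Option Bool)} (hp : 𝓜.Realizes S p)
    (hpf : BoundedError f p) (m : ℕ) :
    ∃ a : Input (CSIdx ι c k) (csAlphabet α c k) → PMF (Fin c → Option Bool),
      𝓜.Realizes (c * (27 ^ m * S)) a ∧
        ∀ z (bvec : Fin c → Bool), (∀ i, f (csX z i) = some (bvec i)) →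
        errProb (a z) (fun i => some (bvec i)) ≤ c * (1 / 2) ^ m := by
  have hamp : 𝓜.Realizes (27 ^ m * S) fun x => bestOfThree^[3 * m] (p x) := by
    simpa [pow_mul] using hp.iterate_bestOfThree (3 * m)
  obtain ⟨a, ha, hap⟩ := exists_realizes_pi (α := csAlphabet α c k) fun i : Fin c =>
    𝓜.pullback (fun j => Sum.inl (i, j)) hamp
  refine ⟨a, ha, fun z bvec hz => ?_⟩
  calc errProb (a z) (fun i => some (bvec i))
      ≤ ∑ i, errProb ((a z).map (· i)) (some (bvec i)) := errProb_pi_le _ _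
    _ ≤ ∑ _i : Fin c, (1 / 2) ^ m := Finset.sum_le_sum fun i _ => by
        rw [hap]
        exact errProb_iterate_bestOfThree_le_half_pow (hpf _ _ (hz i)) m
    _ = c * (1 / 2) ^ m := by simp

theorem exists_cheatSheet_algorithm {hk : 0 < k} (hφ : IsCertifying hk f φ)
    [Nonempty (Input (CSIdx ι c k) (csAlphabet α c k))]
    {p : Input ι α → PMF (Option Bool)} (hp : 𝓜.Realizes S p) (hpf : BoundedError f p)
    {q : Input (CertIdx ι k) (certAlphabet α k) → PMF (Option Bool)} (hq : 𝓜.Realizes T q)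
    (hqφ : ZeroError (certFn φ) q) {m : ℕ} (hm : 6 * c ≤ 2 ^ m) :
    ∃ a : Input (CSIdx ι c k) (csAlphabet α c k) → PMF (Option Bool),
      𝓜.Realizes (c * (27 ^ m * S) + c * (1 + m * T)) a ∧
      OneSidedError (cheatSheet c f φ) a := by
  obtain ⟨a, ha, haf⟩ := exists_address_algorithm (c := c) (k := k) hp hpf m
  choose v hv hcomplete hsound using exists_cell_verifier (c := c) hφ hq hqφ m
  let toBits : (Fin c → Option Bool) → Fin c → Bool := fun u i => (u i).getD false
  have herr : (c : ℝ≥0∞) * (1 / 2) ^ m ≤ 1 / 6 := by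
    rw [one_div, ← ENNReal.inv_pow, ← div_eq_mul_inv]
    refine ENNReal.div_le_of_le_mul ?_
    rw [one_div, mul_comm, ← div_eq_mul_inv, ENNReal.le_div_iff_mul_le (by simp) (by simp),
      mul_comm]
    exact_mod_cast hm
  refine ⟨_, 𝓜.bind ha fun u => hv (toBits u), fun z hz => ?_, fun z hz hacc => ?_⟩
  · obtain ⟨bvec, hf, hcell⟩ := (cheatSheet_eq_some_true_iff z).1 hz
    calc errProb ((a z).bind fun u => v (toBits u) z) (some true)
        ≤ errProb (a z) (fun i => some (bvec i)) + errProb (v bvec z) (some true) :=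
          errProb_bind_le _ _ _ _
      _ ≤ 1 / 6 + 1 / 6 := add_le_add ((haf z bvec hf).trans herr)
          ((hcomplete bvec z hf hcell).trans herr)
      _ = 1 / 3 := by
        rw [ENNReal.div_add_div_same, ENNReal.div_eq_div_iff] <;> norm_num
  · obtain ⟨u, -, hu⟩ := (PMF.mem_support_bind_iff _ _ _).1 hacc
    rw [(cheatSheet_eq_some_true_iff z).2 (hsound _ z hu)] at hz
    simp at hz

end QueryModel

end CheatSheet

namespace QueryModel

variable {ι : Type} {α : ι → ℕ}

/-- The bounded-error query complexity of `f` in the model `𝓜`. -/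
noncomputable def boundedErrorCost (𝓜 : QueryModel) (f : PartialFn ι α) : ℕ :=
  sInf {T | ∃ p : Input ι α → PMF (Option Bool), 𝓜.Realizes T p ∧ BoundedError f p}

/-- The zero-error query complexity of `f` in the model `𝓜`. -/
noncomputable def zeroErrorCost (𝓜 : QueryModel) (f : PartialFn ι α) : ℕ :=
  sInf {T | ∃ p : Input ι α → PMF (Option Bool), 𝓜.Realizes T p ∧ ZeroError f p}

/-- The one-sided-error query complexity of `f` in the model `𝓜`. -/
noncomputable def oneSidedErrorCost (𝓜 : QueryModel) (f : PartialFn ι α) : ℕ :=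
  sInf {T | ∃ p : Input ι α → PMF (Option Bool), 𝓜.Realizes T p ∧ OneSidedError f p}

variable [Finite ι] [Nonempty (Input ι α)] (𝓜 : QueryModel) (f : PartialFn ι α)

theorem exists_realizes_boundedErrorCost :
    ∃ p : Input ι α → PMF (Option Bool),
      𝓜.Realizes (𝓜.boundedErrorCost f) p ∧ BoundedError f p := by
  obtain ⟨T, hT⟩ := 𝓜.exists_realizes_pure f
  exact Nat.sInf_mem (s := {T | ∃ p, 𝓜.Realizes T p ∧ BoundedError f p})
    ⟨T, _, hT, fun x b h => by simp [h]⟩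

theorem exists_realizes_zeroErrorCost :
    ∃ p : Input ι α → PMF (Option Bool),
      𝓜.Realizes (𝓜.zeroErrorCost f) p ∧ ZeroError f p := by
  obtain ⟨T, hT⟩ := 𝓜.exists_realizes_pure f
  exact Nat.sInf_mem (s := {T | ∃ p, 𝓜.Realizes T p ∧ ZeroError f p})
    ⟨T, _, hT, fun x b h => by simp [h]⟩

end QueryModel

/-! ### Randomized algorithms -/

namespace DTree

variable {ι κ : Type} {α : ι → ℕ} {L L' : Type}

/-- Replace every leaf `l` of a decision tree by the tree `g l`. -/
def graft : DTree ι α L → (L → DTree ι α L') → DTree ι α L'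
  | leaf l, g => g l
  | node i child, g => node i fun a => graft (child a) g

theorem eval_graft (t : DTree ι α L) (g : L → DTree ι α L') (x : Input ι α) :
    (t.graft g).eval x = (g (t.eval x)).eval x := by
  induction t with
  | leaf l => rfl
  | node i _ ih => exact ih (x i)

theorem depth_graft_le (t : DTree ι α L) (g : L → DTree ι α L') {d : ℕ}
    (hg : ∀ l, (g l).depth ≤ d) : (t.graft g).depth ≤ t.depth + d := by
  induction t with
  | leaf l => exact (hg l).trans (Nat.le_add_left _ _)
  | node i child ih =>
    rw [graft, depth, depth, add_right_comm]
    refine Nat.succ_le_succ (Finset.sup_le fun a ha => (ih a).trans ?_)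
    gcongr
    exact Finset.le_sup (f := fun a => (child a).depth) ha

/-- Rename the queried indices of a decision tree along `σ`. -/
def reindex (σ : κ → ι) : DTree κ (fun j => α (σ j)) L → DTree ι α L
  | leaf l => leaf l
  | node i child => node (σ i) fun a => reindex σ (child a)

theorem eval_reindex (σ : κ → ι) (t : DTree κ (fun j => α (σ j)) L) (x : Input ι α) :
    (t.reindex σ).eval x = t.eval fun j => x (σ j) := by
  induction t with
  | leaf l => rfl
  | node i _ ih => exact ih (x (σ i))

theorem depth_reindex (σ : κ → ι) (t : DTree κ (fun j => α (σ j)) L) :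
    (t.reindex σ).depth = t.depth := by
  induction t with
  | leaf l => rfl
  | node _ _ ih => simp only [reindex, depth, ih]

end DTree

section Randomized

variable {ι κ : Type} {α : ι → ℕ} {L L' : Type}

/-- `p` is the family of output distributions of a random decision tree of depth at most `T`. -/
def RandRealizes (T : ℕ) (p : Input ι α → PMF L) : Prop :=
  ∃ μ : PMF (DTree ι α L), (∀ t ∈ μ.support, t.depth ≤ T) ∧ ∀ x, p x = μ.map (·.eval x)

theorem RandRealizes.of_dtree {T : ℕ} (t : DTree ι α L) (ht : t.depth ≤ T) :
    RandRealizes T fun x => PMF.pure (t.eval x) :=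
  ⟨PMF.pure t, by simpa using ht, fun x => (PMF.pure_map (·.eval x) t).symm⟩

-- The trees for the different outcomes of `p` are sampled jointly, before any query is made.
theorem RandRealizes.bind [Finite L] {S T : ℕ} {p : Input ι α → PMF L}
    {q : L → Input ι α → PMF L'} (hp : RandRealizes S p) (hq : ∀ l, RandRealizes T (q l)) :
    RandRealizes (S + T) fun x => (p x).bind fun l => q l x := by
  obtain ⟨μ, hμ, hp⟩ := hp
  choose ν hν hq using hq
  obtain ⟨π, hπ⟩ := exists_pmf_pi_map_eq ν
  refine ⟨μ.bind fun t => π.map t.graft, fun s hs => ?_, fun x => ?_⟩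
  · obtain ⟨t, ht, hs⟩ := (PMF.mem_support_bind_iff _ _ _).1 hs
    obtain ⟨g, hg, rfl⟩ := (PMF.mem_support_map_iff _ _ _).1 hs
    refine (t.depth_graft_le g fun l => hν l _ ?_).trans (Nat.add_le_add_right (hμ t ht) T)
    rw [← hπ]
    exact (PMF.mem_support_map_iff _ _ _).2 ⟨g, hg, rfl⟩
  · simp only [hp, hq, ← hπ, PMF.bind_map, PMF.map_bind, PMF.map_comp, Function.comp_def,
      DTree.eval_graft]

theorem RandRealizes.pullback (σ : κ → ι) {T : ℕ} {p : Input κ (fun j => α (σ j)) → PMF L}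
    (hp : RandRealizes T p) : RandRealizes T fun x : Input ι α => p fun j => x (σ j) := by
  obtain ⟨μ, hμ, hp⟩ := hp
  refine ⟨μ.map (DTree.reindex σ), fun s hs => ?_, fun x => ?_⟩
  · obtain ⟨t, ht, rfl⟩ := (PMF.mem_support_map_iff _ _ _).1 hs
    exact (t.depth_reindex σ).trans_le (hμ t ht)
  · simp only [hp, PMF.map_comp, Function.comp_def, DTree.eval_reindex]

/-- Randomized algorithms as a query model. -/
def randModel : QueryModel where
  Realizes := RandRealizes
  pure l := .of_dtree (.leaf l) le_rfl
  query i := .of_dtree (.node i .leaf) (by simp [DTree.depth])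
  bind := .bind
  pullback := .pullback

theorem toOuterMeasure_eval_eq (μ : PMF (DTree ι α L)) (x : Input ι α) (l : L) :
    μ.toOuterMeasure {t | t.eval x = l} = μ.map (·.eval x) l := by
  rw [← PMF.toOuterMeasure_apply_singleton, PMF.toOuterMeasure_map_apply]
  rfl

theorem errProb_le_third_iff {β : Type*} {p : PMF β} {b : β} : errProb p b ≤ 1 / 3 ↔ 2 / 3 ≤ p b :=
  errProb_le_iff (by rw [ENNReal.div_add_div_same, ENNReal.div_eq_one_iff] <;> norm_num)

theorem exists_randRealizes_iff {T : ℕ} {P : (Input ι α → PMF L) → Prop} :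
    (∃ p, randModel.Realizes T p ∧ P p) ↔
      ∃ μ : PMF (DTree ι α L), (∀ t ∈ μ.support, t.depth ≤ T) ∧ P fun x => μ.map (·.eval x) := by
  constructor
  · rintro ⟨p, ⟨μ, hμ, hp⟩, hP⟩
    exact ⟨μ, hμ, by rwa [← funext hp]⟩
  · rintro ⟨μ, hμ, hP⟩
    exact ⟨_, ⟨μ, hμ, fun _ => rfl⟩, hP⟩

theorem boundedErrorCost_randModel (f : PartialFn ι α) : randModel.boundedErrorCost f = Rq f := by
  simp only [QueryModel.boundedErrorCost, Rq, exists_randRealizes_iff, BoundedError,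
    errProb_le_third_iff, toOuterMeasure_eval_eq]

theorem notMem_support_map_iff {β γ : Type*} {μ : PMF β} {g : β → γ} {c : γ} :
    c ∉ (μ.map g).support ↔ ∀ b ∈ μ.support, g b ≠ c := by
  simp only [PMF.mem_support_map_iff, not_exists, not_and, ne_eq]

theorem ne_some_not_iff {o : Option Bool} {b : Bool} :
    o ≠ some (!b) ↔ o = some b ∨ o = none := by
  revert o b; decide

theorem zeroErrorCost_randModel (f : PartialFn ι α) : randModel.zeroErrorCost f = R0q f := by
  simp only [QueryModel.zeroErrorCost, R0q, exists_randRealizes_iff, ZeroError,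
    toOuterMeasure_eval_eq, notMem_support_map_iff, ne_some_not_iff]
  congr! 6 with T μ
  exact ⟨fun h => ⟨fun t ht x b hx => (h x b hx).1 t ht, fun x b hx => (h x b hx).2⟩,
    fun h x b hx => ⟨fun t ht => h.1 t ht x b hx, h.2 x b hx⟩⟩

theorem oneSidedErrorCost_randModel (f : PartialFn ι α) :
    randModel.oneSidedErrorCost f = R1q f := by
  simp only [QueryModel.oneSidedErrorCost, R1q, exists_randRealizes_iff, OneSidedError,
    errProb_le_third_iff, toOuterMeasure_eval_eq, notMem_support_map_iff]

end Randomized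

/-! ### Quantum algorithms -/

section Isometries

variable {τ υ : Type} [Fintype τ] [Fintype υ] {σ σ' : τ → Type} [∀ j, Fintype (σ j)]
  [∀ j, Fintype (σ' j)]

/-- A linear map preserving the sum of squared moduli, as a linear isometry. -/
noncomputable def isometryOfSum (f : EuclideanSpace ℂ τ →ₗ[ℂ] EuclideanSpace ℂ υ)
    (hf : ∀ v, ∑ j, ‖f v j‖ ^ 2 = ∑ j, ‖v j‖ ^ 2) :
    EuclideanSpace ℂ τ →ₗᵢ[ℂ] EuclideanSpace ℂ υ where
  toLinearMap := f
  norm_map' v := by rw [EuclideanSpace.norm_eq, EuclideanSpace.norm_eq, hf]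

/-- Renaming the basis states along an equivalence, as a linear isometry. -/
noncomputable def relabel (e : τ ≃ υ) : EuclideanSpace ℂ τ →ₗᵢ[ℂ] EuclideanSpace ℂ υ :=
  (LinearIsometryEquiv.piLpCongrLeft 2 ℂ ℂ e).toLinearIsometry

theorem relabel_apply (e : τ ≃ υ) (v : EuclideanSpace ℂ τ) (s : υ) :
    relabel e v s = v (e.symm s) := rfl

/-- The block-diagonal isometry with diagonal blocks `V j`. -/
noncomputable def blockIsometry
    (V : ∀ j, EuclideanSpace ℂ (σ j) →ₗᵢ[ℂ] EuclideanSpace ℂ (σ' j)) :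
    EuclideanSpace ℂ (Σ j, σ j) →ₗᵢ[ℂ] EuclideanSpace ℂ (Σ j, σ' j) :=
  isometryOfSum
    { toFun := fun v => WithLp.toLp 2 fun s => V s.1 (WithLp.toLp 2 fun b => v ⟨s.1, b⟩) s.2
      map_add' := fun u v => by
        ext s
        simp only [PiLp.add_apply]
        rw [← PiLp.add_apply, ← map_add]
        rfl
      map_smul' := fun a v => by
        ext s
        simp only [PiLp.smul_apply, RingHom.id_apply]
        rw [← PiLp.smul_apply, ← map_smul]
        rfl }
    fun v => by
      rw [Fintype.sum_sigma, Fintype.sum_sigma]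
      refine Finset.sum_congr rfl fun j _ => ?_
      have h := (V j).norm_map (WithLp.toLp 2 fun b => v ⟨j, b⟩)
      rwa [← sq_eq_sq₀ (norm_nonneg _) (norm_nonneg _), EuclideanSpace.norm_sq_eq,
        EuclideanSpace.norm_sq_eq] at h

/-- The state obtained from the state `u` by adjoining the state `v j` to each basis state `j`. -/
noncomputable def sigmaState (u : EuclideanSpace ℂ τ) (v : ∀ j, EuclideanSpace ℂ (σ j)) :
    EuclideanSpace ℂ (Σ j, σ j) :=
  WithLp.toLp 2 fun s => u s.1 * v s.1 s.2

omit [Fintype τ] [∀ j, Fintype (σ j)] in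
theorem sigmaState_apply (u : EuclideanSpace ℂ τ) (v : ∀ j, EuclideanSpace ℂ (σ j))
    (s : Σ j, σ j) : sigmaState u v s = u s.1 * v s.1 s.2 := rfl

/-- `sigmaState` with fixed unit vectors `v j`, as an isometry in the other argument. -/
noncomputable def adjoinIsometry (v : ∀ j, EuclideanSpace ℂ (σ j)) (hv : ∀ j, ‖v j‖ = 1) :
    EuclideanSpace ℂ τ →ₗᵢ[ℂ] EuclideanSpace ℂ (Σ j, σ j) :=
  isometryOfSum
    { toFun := fun u => sigmaState u v
      map_add' := fun u w => by ext s; simp [sigmaState_apply, add_mul]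
      map_smul' := fun a u => by ext s; simp [sigmaState_apply, mul_assoc] }
    fun u => by
      have h : ∀ j, ∑ b, ‖v j b‖ ^ 2 = 1 := fun j => by
        rw [← EuclideanSpace.norm_sq_eq, hv, one_pow]
      simp [Fintype.sum_sigma, sigmaState_apply, mul_pow, ← Finset.mul_sum, h]

theorem blockIsometry_sigmaState
    (V : ∀ j, EuclideanSpace ℂ (σ j) →ₗᵢ[ℂ] EuclideanSpace ℂ (σ' j)) (u : EuclideanSpace ℂ τ)
    (v : ∀ j, EuclideanSpace ℂ (σ j)) :
    blockIsometry V (sigmaState u v) = sigmaState u fun j => V j (v j) := by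
  ext ⟨j, b⟩
  exact congrArg (· b) ((V j).map_smul (u j) (v j))

end Isometries

section Preparation

variable {ι κ : Type} {α : ι → ℕ}

/-- Addition of `b` as a permutation of `Fin n`. -/
def finAddRight {n : ℕ} (b : Fin n) : Equiv.Perm (Fin n) :=
  haveI := NeZero.of_pos b.pos
  Equiv.addRight b

/-- The action of a query on a register in which the workspace content `w` determines the queried
position `q w`. -/
def oraclePerm (q : κ → ι) (x : Input ι α) : Equiv.Perm (Σ w, Fin (α (q w))) :=
  Equiv.sigmaCongrRight fun w => finAddRight (x (q w))

/-- The query isometry on a register in which the workspace content `w` determines the queried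
position `q w`. -/
noncomputable def oracleIsometry [Fintype κ] (q : κ → ι) (x : Input ι α) :
    EuclideanSpace ℂ (Σ w, Fin (α (q w))) →ₗᵢ[ℂ] EuclideanSpace ℂ (Σ w, Fin (α (q w))) :=
  relabel (oraclePerm q x)

/-- The family of states `ψ x` is prepared by a `T`-query quantum algorithm with arbitrary
isometries between the queries; each query may use a register of a different shape. -/
def Prepares : ℕ → ∀ {τ : Type} [Fintype τ], (Input ι α → EuclideanSpace ℂ τ) → Prop
  | 0, _, _, ψ => ∃ v, ‖v‖ = 1 ∧ ψ = fun _ => v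
  | T + 1, τ, _, ψ => ∃ (κ : Type) (_ : Fintype κ) (q : κ → ι)
      (χ : Input ι α → EuclideanSpace ℂ (Σ w, Fin (α (q w))))
      (V : EuclideanSpace ℂ (Σ w, Fin (α (q w))) →ₗᵢ[ℂ] EuclideanSpace ℂ τ),
      Prepares T χ ∧ ψ = fun x => V (oracleIsometry q x (χ x))

namespace Prepares

variable {τ υ : Type} [Fintype τ] [Fintype υ] {S T : ℕ} {ψ : Input ι α → EuclideanSpace ℂ τ}

theorem norm_eq_one (hψ : Prepares T ψ) (x : Input ι α) : ‖ψ x‖ = 1 := by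
  induction T generalizing τ with
  | zero =>
    obtain ⟨v, hv, rfl⟩ := hψ
    exact hv
  | succ T ih =>
    obtain ⟨κ, _, q, χ, V, hχ, rfl⟩ := hψ
    rw [V.norm_map, LinearIsometry.norm_map, ih hχ]

theorem isometry (hψ : Prepares T ψ) (V : EuclideanSpace ℂ τ →ₗᵢ[ℂ] EuclideanSpace ℂ υ) :
    Prepares T fun x => V (ψ x) := by
  cases T with
  | zero =>
    obtain ⟨v, hv, rfl⟩ := hψ
    exact ⟨V v, by rw [V.norm_map, hv], rfl⟩
  | succ T =>
    obtain ⟨κ, _, q, χ, V', hχ, rfl⟩ := hψ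
    exact ⟨κ, inferInstance, q, χ, V.comp V', hχ, rfl⟩

theorem pullback (σ : κ → ι) {ψ : Input κ (fun j => α (σ j)) → EuclideanSpace ℂ τ}
    (hψ : Prepares T ψ) : Prepares T fun x : Input ι α => ψ fun j => x (σ j) := by
  induction T generalizing τ with
  | zero =>
    obtain ⟨v, hv, rfl⟩ := hψ
    exact ⟨v, hv, rfl⟩
  | succ T ih =>
    obtain ⟨κ, _, q, χ, V, hχ, rfl⟩ := hψ
    exact ⟨κ, inferInstance, fun w => σ (q w), _, V, ih hχ, rfl⟩

-- Controlled on the basis state `j`, the `T` queries of all the second algorithms are made in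
-- parallel: the blocks share one query register, whose position depends on the block.
theorem sigma {σ : τ → Type} [∀ j, Fintype (σ j)] {χ : ∀ j, Input ι α → EuclideanSpace ℂ (σ j)}
    (hψ : Prepares S ψ) (hχ : ∀ j, Prepares T (χ j)) :
    Prepares (S + T) fun x => sigmaState (ψ x) fun j => χ j x := by
  induction T generalizing σ with
  | zero =>
    choose v hv hχ using hχ
    simp only [hχ]
    exact hψ.isometry (adjoinIsometry v hv)
  | succ T ih =>
    choose κ _ q χ' V hχ' hχ using hχ
    let assoc := Equiv.sigmaAssoc fun j w => Fin (α (q j w))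
    refine ⟨Σ j, κ j, inferInstance, fun s => q s.1 s.2, _,
      (blockIsometry V).comp (relabel assoc), (ih hχ').isometry (relabel assoc.symm), ?_⟩
    funext x
    have horacle : relabel assoc (oracleIsometry (fun s : Σ j, κ j => q s.1 s.2) x
        (relabel assoc.symm (sigmaState (ψ x) fun j => χ' j x))) =
        sigmaState (ψ x) fun j => oracleIsometry (q j) x (χ' j x) := rfl
    simp only [hχ, LinearIsometry.coe_comp, Function.comp_apply, horacle,
      blockIsometry_sigmaState]

end Prepares

end Preparation

section Measurement

variable {τ : Type} [Fintype τ]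

/-- The outcome distribution of measuring the unit vector `v` in the standard basis. -/
noncomputable def bornPMF (v : EuclideanSpace ℂ τ) (hv : ‖v‖ = 1) : PMF τ :=
  PMF.ofFintype (fun j => ENNReal.ofReal (‖v j‖ ^ 2)) <| by
    rw [← ENNReal.ofReal_sum_of_nonneg fun _ _ => by positivity, ← EuclideanSpace.norm_sq_eq, hv]
    simp

theorem bornPMF_apply (v : EuclideanSpace ℂ τ) (hv : ‖v‖ = 1) (j : τ) :
    bornPMF v hv j = ENNReal.ofReal (‖v j‖ ^ 2) := rfl

theorem bornPMF_single [DecidableEq τ] (j : τ) (hv : ‖EuclideanSpace.single j (1 : ℂ)‖ = 1) :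
    bornPMF (EuclideanSpace.single j 1) hv = PMF.pure j := by
  ext i
  rw [bornPMF_apply, PMF.pure_apply, PiLp.single_apply]
  split_ifs <;> simp

theorem bornPMF_sigmaState {σ : τ → Type} [∀ j, Fintype (σ j)] {u : EuclideanSpace ℂ τ}
    {v : ∀ j, EuclideanSpace ℂ (σ j)} (huv : ‖sigmaState u v‖ = 1) (hu : ‖u‖ = 1)
    (hv : ∀ j, ‖v j‖ = 1) :
    bornPMF (sigmaState u v) huv =
      (bornPMF u hu).bind fun j => (bornPMF (v j) (hv j)).map (Sigma.mk j) := by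
  classical
  ext ⟨i, b⟩
  rw [PMF.bind_apply, tsum_eq_single i, PMF.map_apply, tsum_eq_single b]
  · simp [bornPMF_apply, sigmaState_apply, mul_pow, ENNReal.ofReal_mul]
  · intro b' hb'
    simp [hb'.symm]
  · intro j hj
    simp [PMF.map_apply, hj.symm]

variable {ι : Type} {α : ι → ℕ} {L : Type}

/-- `p` is the family of output distributions of a measurement of states prepared with `T`
quantum queries, where the basis state `j` is read as the output `o j`. -/
def QuantRealizes (T : ℕ) (p : Input ι α → PMF L) : Prop :=
  ∃ (τ : Type) (_ : Fintype τ) (ψ : Input ι α → EuclideanSpace ℂ τ) (hψ : Prepares T ψ)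
    (o : τ → L), ∀ x, p x = (bornPMF (ψ x) (hψ.norm_eq_one x)).map o

theorem QuantRealizes.pure (l : L) : QuantRealizes 0 fun _ : Input ι α => PMF.pure l :=
  ⟨Unit, inferInstance, fun _ => EuclideanSpace.single () 1, ⟨_, by simp, rfl⟩, fun _ => l,
    fun x => by rw [bornPMF_single, PMF.pure_map]⟩

theorem QuantRealizes.query [Nonempty (Input ι α)] (i : ι) :
    QuantRealizes 1 fun x : Input ι α => PMF.pure (x i) := by
  obtain ⟨x₀⟩ := ‹Nonempty (Input ι α)›
  have : NeZero (α i) := .of_pos (x₀ i).pos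
  have horacle : ∀ x : Input ι α, oracleIsometry (fun _ : Unit => i) x
      (EuclideanSpace.single ⟨(), 0⟩ 1) = EuclideanSpace.single ⟨(), x i⟩ 1 := fun x => by
    ext s
    rw [oracleIsometry, relabel_apply, PiLp.single_apply, PiLp.single_apply]
    refine if_congr ?_ rfl rfl
    rw [Equiv.symm_apply_eq]
    simp [oraclePerm, finAddRight]
  refine ⟨Σ _ : Unit, Fin (α i), inferInstance, fun x => EuclideanSpace.single ⟨(), x i⟩ 1,
    ⟨Unit, inferInstance, fun _ => i, fun _ => EuclideanSpace.single ⟨(), 0⟩ 1,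
      LinearIsometry.id, ⟨_, by simp, rfl⟩, funext fun x => (horacle x).symm⟩,
    fun s => s.2, fun x => by rw [bornPMF_single, PMF.pure_map]⟩

theorem QuantRealizes.bind {L' : Type} {S T : ℕ} {p : Input ι α → PMF L}
    {q : L → Input ι α → PMF L'} (hp : QuantRealizes S p) (hq : ∀ l, QuantRealizes T (q l)) :
    QuantRealizes (S + T) fun x => (p x).bind fun l => q l x := by
  obtain ⟨τ, _, ψ, hψ, o, hp⟩ := hp
  choose σ _ χ hχ o' hq using hq
  refine ⟨Σ j, σ (o j), inferInstance, _, hψ.sigma fun j => hχ (o j), fun s => o' (o s.1) s.2,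
    fun x => ?_⟩
  rw [bornPMF_sigmaState _ (hψ.norm_eq_one x) fun j => (hχ (o j)).norm_eq_one x, PMF.map_bind]
  simp only [hp, hq, PMF.bind_map, PMF.map_comp, Function.comp_def]

/-- Quantum algorithms as a query model. -/
def quantModel : QueryModel where
  Realizes := QuantRealizes
  pure := .pure
  query := .query
  bind := .bind
  pullback σ := fun ⟨τ, _, _, hψ, o, hp⟩ => ⟨τ, inferInstance, _, hψ.pullback σ, o, fun _ => hp _⟩

end Measurement

/-! ### Quantum algorithms as matrix products -/

section Matrices

variable {τ υ : Type} [Fintype τ] [Fintype υ]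

theorem exists_isometry_of_unitary [DecidableEq τ] {U : Matrix τ τ ℂ}
    (hU : U ∈ Matrix.unitaryGroup τ ℂ) :
    ∃ V : EuclideanSpace ℂ τ →ₗᵢ[ℂ] EuclideanSpace ℂ τ,
      ∀ v, V (WithLp.toLp 2 v) = WithLp.toLp 2 (U.mulVec v) :=
  ⟨(Unitary.linearIsometryEquiv ⟨_, Unitary.map_mem (Matrix.toEuclideanCLM (n := τ) (𝕜 := ℂ))
    hU⟩).toLinearIsometry, fun _ => rfl⟩

theorem exists_unitary_of_isometry [DecidableEq τ]
    (V : EuclideanSpace ℂ τ →ₗᵢ[ℂ] EuclideanSpace ℂ τ) :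
    ∃ U ∈ Matrix.unitaryGroup τ ℂ, ∀ v, WithLp.toLp 2 (U.mulVec v) = V (WithLp.toLp 2 v) := by
  let e := Unitary.linearIsometryEquiv.symm (V.toLinearIsometryEquiv rfl)
  refine ⟨(Matrix.toEuclideanCLM (n := τ) (𝕜 := ℂ)).symm e,
    Unitary.map_mem (Matrix.toEuclideanCLM (n := τ) (𝕜 := ℂ)).symm e.2, fun v => ?_⟩
  rw [← Matrix.toEuclideanCLM_toLp, StarAlgEquiv.apply_symm_apply]
  rfl

theorem exists_isometry_apply_eq {E F : Type*} [NormedAddCommGroup E] [InnerProductSpace ℂ E]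
    [NormedAddCommGroup F] [InnerProductSpace ℂ F] [FiniteDimensional ℂ F]
    (P R : E →ₗᵢ[ℂ] F) : ∃ V : F →ₗᵢ[ℂ] F, ∀ v, V (P v) = R v := by
  refine ⟨(R.comp P.equivRange.symm.toLinearIsometry).extend, fun v => ?_⟩
  simpa using (R.comp P.equivRange.symm.toLinearIsometry).extend_apply (P.equivRange v)

/-- Extension by zero along an embedding of index types, as a linear isometry. -/
noncomputable def embedIsometry (e : τ ↪ υ) : EuclideanSpace ℂ τ →ₗᵢ[ℂ] EuclideanSpace ℂ υ :=
  isometryOfSum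
    ((WithLp.linearEquiv 2 ℂ (υ → ℂ)).symm.toLinearMap ∘ₗ Function.ExtendByZero.linearMap ℂ e ∘ₗ
      (WithLp.linearEquiv 2 ℂ (τ → ℂ)).toLinearMap)
    fun v => by
      refine (Fintype.sum_of_injective e e.injective _ _ (fun s hs => ?_) fun i => ?_).symm
      · simp [Function.ExtendByZero.linearMap_apply, Function.extend_apply' _ _ _ hs]
      · simp [Function.ExtendByZero.linearMap_apply, e.injective.extend_apply]

theorem embedIsometry_apply_self (e : τ ↪ υ) (v : EuclideanSpace ℂ τ) (j : τ) :
    embedIsometry e v (e j) = v j :=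
  e.injective.extend_apply _ _ _

theorem embedIsometry_apply_eq_zero (e : τ ↪ υ) (v : EuclideanSpace ℂ τ) {s : υ}
    (hs : s ∉ Set.range e) : embedIsometry e v s = 0 :=
  Function.extend_apply' _ _ _ hs

theorem embedIsometry_relabel {g : Equiv.Perm τ} {h : Equiv.Perm υ} {e : τ ↪ υ}
    (hgh : ∀ j, e (g j) = h (e j)) (v : EuclideanSpace ℂ τ) :
    embedIsometry e (relabel g v) = relabel h (embedIsometry e v) := by
  ext s
  rw [relabel_apply]
  by_cases hs : s ∈ Set.range e
  · obtain ⟨j, rfl⟩ := hs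
    obtain ⟨i, rfl⟩ := g.surjective j
    rw [embedIsometry_apply_self, relabel_apply, Equiv.symm_apply_apply, hgh,
      Equiv.symm_apply_apply, embedIsometry_apply_self]
  · rw [embedIsometry_apply_eq_zero _ _ hs, embedIsometry_apply_eq_zero]
    rintro ⟨j, hj⟩
    exact hs ⟨g j, by rw [hgh, hj, Equiv.apply_symm_apply]⟩

theorem qProd_congr {U U' : ℕ → Matrix τ τ ℂ} (O : Matrix τ τ ℂ) {T : ℕ}
    (h : ∀ t ≤ T, U t = U' t) : qProd U O T = qProd U' O T := by
  induction T with
  | zero => exact h 0 le_rfl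
  | succ T ih => rw [qProd, qProd, h _ le_rfl, ih fun t ht => h t (ht.trans T.le_succ)]

end Matrices

section Simulation

variable {ι κ : Type} {α : ι → ℕ}

/-- The permutation of the basis states of a quantum algorithm performed by the query oracle. -/
def queryPerm (W : ℕ) (x : Input ι α) : Equiv.Perm (QIdx ι α W) :=
  (Equiv.sigmaCongrRight fun i => finAddRight (x i)).prodCongr (Equiv.refl _)

/-- Placing a register whose workspace content `w` determines the queried position `q w` into the
query and workspace registers of a quantum algorithm. -/
def registerEmbedding (q : κ → ι) {W : ℕ} (e : κ ↪ Fin W) :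
    (Σ w, Fin (α (q w))) ↪ QIdx ι α W where
  toFun s := (⟨q s.1, s.2⟩, e s.1)
  inj' := by
    rintro ⟨w, a⟩ ⟨w', a'⟩ h
    obtain rfl : w = w' := e.injective (congrArg Prod.snd h)
    simpa using congrArg Prod.fst h

/-- Pairs of a queried position and a workspace content, regrouped as basis states of a quantum
algorithm. -/
def registerEquiv (W : ℕ) : (Σ w : ι × Fin W, Fin (α w.1)) ≃ QIdx ι α W where
  toFun s := (⟨s.1.1, s.2⟩, s.1.2)
  invFun j := ⟨(j.1.1, j.2), j.1.2⟩

variable [Fintype ι] [DecidableEq ι]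

theorem oracleMatrix_mulVec (W : ℕ) (x : Input ι α) (v : QIdx ι α W → ℂ) :
    WithLp.toLp 2 ((oracleMatrix W x).mulVec v) = relabel (queryPerm W x) (WithLp.toLp 2 v) := by
  ext j
  have h : ∀ j' : QIdx ι α W,
      (j.2 = j'.2 ∧ j.1 = ⟨j'.1.1, j'.1.2 + x j'.1.1⟩) ↔ j' = (queryPerm W x).symm j := by
    intro j'
    rw [Equiv.eq_symm_apply]
    constructor
    · rintro ⟨h2, h1⟩
      exact Prod.ext h1.symm h2.symm
    · rintro rfl
      exact ⟨rfl, rfl⟩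
  simp [Matrix.mulVec, dotProduct, oracleMatrix, h, relabel_apply]

theorem prepares_qProd {W : ℕ} {U : ℕ → Matrix (QIdx ι α W) (QIdx ι α W) ℂ}
    (hU : ∀ t, U t ∈ Matrix.unitaryGroup (QIdx ι α W) ℂ) {v : QIdx ι α W → ℂ}
    (hv : ∑ j, ‖v j‖ ^ 2 = 1) (T : ℕ) :
    Prepares T fun x => WithLp.toLp 2 ((qProd U (oracleMatrix W x) T).mulVec v) := by
  induction T with
  | zero =>
    obtain ⟨V, hV⟩ := exists_isometry_of_unitary (hU 0)
    refine ⟨V (WithLp.toLp 2 v), ?_, by simp [qProd, hV]⟩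
    rw [V.norm_map, EuclideanSpace.norm_eq, Real.sqrt_eq_one]
    exact hv
  | succ T ih =>
    obtain ⟨V, hV⟩ := exists_isometry_of_unitary (hU (T + 1))
    refine ⟨ι × Fin W, inferInstance, Prod.fst, _, V.comp (relabel (registerEquiv W)),
      ih.isometry (relabel (registerEquiv W).symm), funext fun x => ?_⟩
    rw [qProd, ← Matrix.mulVec_mulVec, ← Matrix.mulVec_mulVec, ← hV, LinearIsometry.coe_comp,
      Function.comp_apply, oracleMatrix_mulVec]
    rfl

-- The workspace must be large enough to embed every register used along the way.
theorem Prepares.exists_unitaries {T : ℕ} {τ : Type} [Fintype τ]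
    {ψ : Input ι α → EuclideanSpace ℂ τ} (hψ : Prepares T ψ) :
    ∃ N, ∀ W ≥ N, ∀ e : τ ↪ QIdx ι α W, ∃ U : ℕ → Matrix (QIdx ι α W) (QIdx ι α W) ℂ,
      (∀ t, U t ∈ Matrix.unitaryGroup (QIdx ι α W) ℂ) ∧ ∃ v : QIdx ι α W → ℂ,
      ∑ j, ‖v j‖ ^ 2 = 1 ∧ ∀ x,
        WithLp.toLp 2 ((qProd U (oracleMatrix W x) T).mulVec v) = embedIsometry e (ψ x) := by
  induction T generalizing τ with
  | zero =>
    obtain ⟨v, hv, rfl⟩ := hψ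
    refine ⟨0, fun W _ e => ⟨fun _ => 1, fun _ => one_mem _, (embedIsometry e v).ofLp, ?_,
      fun x => by simp [qProd]⟩⟩
    rw [← EuclideanSpace.norm_sq_eq, LinearIsometry.norm_map, hv, one_pow]
  | succ T ih =>
    obtain ⟨κ, _, q, χ, V, hχ, rfl⟩ := hψ
    obtain ⟨N, hN⟩ := ih hχ
    refine ⟨max N (Fintype.card κ), fun W hW e => ?_⟩
    obtain ⟨c⟩ : Nonempty (κ ↪ Fin W) :=
      Function.Embedding.nonempty_of_card_le (by simpa using le_of_max_le_right hW)
    obtain ⟨U, hU, v, hv, hUv⟩ := hN W (le_of_max_le_left hW) (registerEmbedding q c)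
    obtain ⟨V', hV'⟩ := exists_isometry_apply_eq (embedIsometry (registerEmbedding q c))
      ((embedIsometry e).comp V)
    obtain ⟨B, hB, hBV⟩ := exists_unitary_of_isometry V'
    refine ⟨fun t => if t ≤ T then U t else B, fun t => ?_, v, hv, fun x => ?_⟩
    · dsimp only
      split_ifs
      exacts [hU t, hB]
    · have hprefix : qProd (fun t => if t ≤ T then U t else B) (oracleMatrix W x) T =
          qProd U (oracleMatrix W x) T := qProd_congr _ fun t ht => if_pos ht
      rw [qProd, hprefix, if_neg T.lt_succ_self.not_ge, ← Matrix.mulVec_mulVec,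
        ← Matrix.mulVec_mulVec, hBV, oracleMatrix_mulVec, hUv, ← embedIsometry_relabel, hV']
      · rfl
      · exact fun _ => rfl

theorem Prepares.exists_qalg [Nonempty (Σ i, Fin (α i))] {T : ℕ} {τ : Type} [Fintype τ]
    {ψ : Input ι α → EuclideanSpace ℂ τ} (hψ : Prepares T ψ) (o : τ → Option Bool) :
    ∃ A : QAlg ι α, A.T = T ∧
      ∀ x v, A.outProb x v = ∑ j, if o j = v then ‖ψ x j‖ ^ 2 else 0 := by
  obtain ⟨N, hN⟩ := hψ.exists_unitaries
  let W := max N (Fintype.card τ)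
  obtain ⟨c⟩ : Nonempty (τ ↪ Fin W) := Function.Embedding.nonempty_of_card_le (by simp [W])
  let e : τ ↪ QIdx ι α W :=
    ⟨fun j => (Classical.arbitrary _, c j), fun j j' h => c.injective (congrArg Prod.snd h)⟩
  obtain ⟨U, hU, v, hv, hUv⟩ := hN W (le_max_left _ _) e
  have hfinal : ∀ x s, (qProd U (oracleMatrix W x) T).mulVec v s = embedIsometry e (ψ x) s :=
    fun x s => congrArg (· s) (hUv x)
  refine ⟨⟨T, W, U, hU, v, hv, Function.extend e o fun _ => none⟩, rfl, fun x l => ?_⟩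
  refine (Fintype.sum_of_injective e e.injective _ _ (fun s hs => ?_) fun j => ?_).symm
  · simp [QAlg.finalState, hfinal, embedIsometry_apply_eq_zero e _ hs]
  · simp [QAlg.finalState, hfinal, embedIsometry_apply_self, e.injective.extend_apply]

theorem bornPMF_map_apply {τ L : Type} [Fintype τ] [DecidableEq L] (v : EuclideanSpace ℂ τ)
    (hv : ‖v‖ = 1) (o : τ → L) (l : L) :
    (bornPMF v hv).map o l = ENNReal.ofReal (∑ j, if o j = l then ‖v j‖ ^ 2 else 0) := by
  rw [PMF.map_apply, tsum_fintype, ENNReal.ofReal_sum_of_nonneg fun j _ => by positivity]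
  refine Finset.sum_congr rfl fun j _ => ?_
  simp only [bornPMF_apply, eq_comm (a := l)]
  split_ifs <;> simp

namespace QAlg

theorem prepares_finalState (A : QAlg ι α) :
    Prepares A.T fun x => WithLp.toLp 2 (A.finalState x) :=
  prepares_qProd A.unitary A.init_norm A.T

/-- The output distribution of a quantum algorithm; `QAlg.outProb` gives its point masses. -/
noncomputable def outPMF (A : QAlg ι α) (x : Input ι α) : PMF (Option Bool) :=
  (bornPMF _ (A.prepares_finalState.norm_eq_one x)).map A.out

variable {A : QAlg ι α} {x : Input ι α} {v : Option Bool}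

theorem outPMF_apply : A.outPMF x v = ENNReal.ofReal (A.outProb x v) :=
  bornPMF_map_apply _ _ _ _

theorem outProb_nonneg : 0 ≤ A.outProb x v :=
  Finset.sum_nonneg fun j _ => by positivity

theorem notMem_support_outPMF_iff : v ∉ (A.outPMF x).support ↔ A.outProb x v = 0 := by
  rw [PMF.mem_support_iff, not_not, outPMF_apply, ENNReal.ofReal_eq_zero,
    outProb_nonneg.ge_iff_eq']

theorem outPMF_le_half_iff : A.outPMF x v ≤ 1 / 2 ↔ A.outProb x v ≤ 1 / 2 := by
  rw [outPMF_apply, show (1 / 2 : ℝ≥0∞) = ENNReal.ofReal (1 / 2) by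
    rw [ENNReal.ofReal_div_of_pos] <;> simp, ENNReal.ofReal_le_ofReal_iff (by norm_num)]

theorem errProb_outPMF_le_third_iff : errProb (A.outPMF x) v ≤ 1 / 3 ↔ 2 / 3 ≤ A.outProb x v := by
  rw [errProb_le_third_iff, outPMF_apply, show (2 / 3 : ℝ≥0∞) = ENNReal.ofReal (2 / 3) by
    rw [ENNReal.ofReal_div_of_pos] <;> simp, ENNReal.ofReal_le_ofReal_iff outProb_nonneg]

end QAlg

theorem exists_quantRealizes_iff [Nonempty (Σ i, Fin (α i))] {T : ℕ}
    {P : (Input ι α → PMF (Option Bool)) → Prop} :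
    (∃ p, quantModel.Realizes T p ∧ P p) ↔ ∃ A : QAlg ι α, A.T = T ∧ P A.outPMF := by
  constructor
  · rintro ⟨p, ⟨τ, _, ψ, hψ, o, hp⟩, hP⟩
    obtain ⟨A, hT, hA⟩ := hψ.exists_qalg o
    obtain rfl : p = A.outPMF := by
      ext x v
      rw [hp, bornPMF_map_apply, QAlg.outPMF_apply, hA]
    exact ⟨A, hT, hP⟩
  · rintro ⟨A, rfl, hP⟩
    exact ⟨_, ⟨_, inferInstance, _, A.prepares_finalState, A.out, fun _ => rfl⟩, hP⟩

theorem sInf_setOf_exists_le {β : Type*} (g : β → ℕ) (P : β → Prop) :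
    sInf {d | ∃ a, g a ≤ d ∧ P a} = sInf {d | ∃ a, g a = d ∧ P a} := by
  by_cases h : ∃ a, P a
  · obtain ⟨a, ha⟩ := h
    refine le_antisymm (csInf_le_csInf' ⟨_, a, rfl, ha⟩ fun d ⟨b, hb, hP⟩ => ⟨b, hb.le, hP⟩) ?_
    refine le_csInf ⟨_, a, le_rfl, ha⟩ ?_
    rintro d ⟨b, hb, hP⟩
    exact (Nat.sInf_le (s := {d | ∃ a, g a = d ∧ P a}) ⟨b, rfl, hP⟩).trans hb
  · push Not at h
    simp [h]

variable [Nonempty (Σ i, Fin (α i))] (f : PartialFn ι α)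

theorem boundedErrorCost_quantModel : quantModel.boundedErrorCost f = Qq f := by
  simp only [QueryModel.boundedErrorCost, Qq, sInf_setOf_exists_le, exists_quantRealizes_iff,
    BoundedError, QAlg.errProb_outPMF_le_third_iff]

theorem zeroErrorCost_quantModel : quantModel.zeroErrorCost f = Q0q f := by
  simp only [QueryModel.zeroErrorCost, Q0q, sInf_setOf_exists_le, exists_quantRealizes_iff,
    ZeroError, QAlg.notMem_support_outPMF_iff, QAlg.outPMF_le_half_iff]

theorem oneSidedErrorCost_quantModel : quantModel.oneSidedErrorCost f = Q1q f := by
  simp only [QueryModel.oneSidedErrorCost, Q1q, sInf_setOf_exists_le, exists_quantRealizes_iff,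
    OneSidedError, QAlg.errProb_outPMF_le_third_iff, QAlg.notMem_support_outPMF_iff]

end Simulation

/-! ### Certificates and deterministic query complexity -/

section Certificates

variable {ι : Type} {α : ι → ℕ} {β : Type*}

/-- The inputs agreeing with `x` on `S`. -/
def subcube (S : Finset ι) (x : Input ι α) : Set (Input ι α) := {y | ∀ i ∈ S, y i = x i}

/-- The values of `x` on `S` certify the value `g x`. For a partial function this includes
certifying that the input lies in the domain, unlike in `CxAt`. -/
def IsCertificate (g : Input ι α → β) (x : Input ι α) (S : Finset ι) : Prop :=
  ∀ y ∈ subcube S x, g y = g x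

theorem subcube_inter_subcube [DecidableEq ι] {Q R : Finset ι} {x y : Input ι α}
    (h : y ∈ subcube Q x) : subcube Q x ∩ subcube R y = subcube (Q ∪ R) y := by
  ext z
  have hQ : z ∈ subcube Q x ↔ z ∈ subcube Q y :=
    forall₂_congr fun i hi => by rw [h i hi]
  rw [Set.mem_inter_iff, hQ]
  simp only [subcube, Set.mem_ofPred_eq, Finset.forall_mem_union]

theorem IsCertificate.exists_ne {g : Input ι α → β} {x y : Input ι α} {R S : Finset ι}
    (hR : IsCertificate g x R) (hS : IsCertificate g y S) (hxy : g x ≠ g y) :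
    ∃ i ∈ R, i ∈ S ∧ x i ≠ y i := by
  classical
  by_contra! hagree
  let z : Input ι α := fun i => if i ∈ R then x i else y i
  refine hxy ((hR z fun i hi => if_pos hi).symm.trans (hS z fun i hi => ?_))
  by_cases hiR : i ∈ R
  · exact (if_pos hiR).trans (hagree i hiR hi)
  · exact if_neg hiR

/-- Some decision tree of depth at most `d` computes `f` on the inputs in `P`. -/
def DecidesOn (f : PartialFn ι α) (d : ℕ) (P : Set (Input ι α)) : Prop :=
  ∃ t : DTree ι α (Option Bool), t.depth ≤ d ∧ ∀ x ∈ P, ∀ b, f x = some b → t.eval x = some b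

variable {f : PartialFn ι α} {d s : ℕ} {P : Set (Input ι α)}

namespace DecidesOn

theorem leaf (b : Bool) (h : ∀ x ∈ P, f x ≠ some (!b)) (d : ℕ) : DecidesOn f d P := by
  refine ⟨.leaf (some b), d.zero_le, fun x hx a ha => congrArg some ?_⟩
  by_contra hba
  exact h x hx (ha.trans (congrArg some (Bool.eq_not_of_ne (Ne.symm hba))))

theorem node (i : ι) (h : ∀ a, DecidesOn f d {x | x ∈ P ∧ x i = a}) : DecidesOn f (d + 1) P := by
  choose t ht h using h
  refine ⟨.node i t, ?_, fun x hx b hb => h (x i) x ⟨hx, rfl⟩ b hb⟩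
  exact Nat.succ_le_succ (Finset.sup_le fun a _ => ht a)

theorem query_finset (S : Finset ι) (h : ∀ x ∈ P, DecidesOn f d (P ∩ subcube S x)) :
    DecidesOn f (d + S.card) P := by
  classical
  induction S using Finset.induction_on generalizing P with
  | empty =>
    rcases P.eq_empty_or_nonempty with rfl | ⟨x, hx⟩
    · exact leaf true (by simp) _
    · simpa [subcube] using h x hx
  | insert i S hi ih =>
    rw [Finset.card_insert_of_notMem hi, ← add_assoc]
    refine node i fun a => ih fun x hx => ?_
    convert h x hx.1 using 1
    ext y
    simp only [subcube, Set.mem_inter_iff, Set.mem_ofPred_eq, Finset.forall_mem_insert, hx.2,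
      and_assoc]

end DecidesOn

-- Querying the certificate of a 1-input shrinks every certificate of a 0-input, since the two
-- share a position; after `t` rounds no 0-input of the subcube is left uncertified.
theorem decidesOn_subcube [DecidableEq ι]
    (hC : ∀ x, f x = some true → ∃ S : Finset ι, S.card ≤ s ∧ IsCertificate f x S)
    (t : ℕ) (Q : Finset ι) (x₀ : Input ι α)
    (hQ : ∀ x ∈ subcube Q x₀, f x = some false →
      ∃ S : Finset ι, (S \ Q).card ≤ t ∧ IsCertificate f x S) :
    DecidesOn f (t * s) (subcube Q x₀) := by
  induction t generalizing Q x₀ with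
  | zero =>
    by_cases hx : ∃ x ∈ subcube Q x₀, f x = some false
    · obtain ⟨x, hxQ, hx⟩ := hx
      obtain ⟨S, hSQ, hS⟩ := hQ x hxQ hx
      rw [Nat.le_zero, Finset.card_eq_zero, Finset.sdiff_eq_empty_iff_subset] at hSQ
      refine DecidesOn.leaf false (fun y hy => ?_) _
      rw [hS y fun i hi => (hy i (hSQ hi)).trans (hxQ i (hSQ hi)).symm, hx]
      simp
    · exact DecidesOn.leaf true (fun y hy hfy => hx ⟨y, hy, hfy⟩) _
  | succ t ih =>
    by_cases hx : ∃ x ∈ subcube Q x₀, f x = some true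
    · obtain ⟨x, hxQ, hx⟩ := hx
      obtain ⟨R, hRs, hR⟩ := hC x hx
      have hround : DecidesOn f (t * s + R.card) (subcube Q x₀) := by
        refine DecidesOn.query_finset R fun y hyQ => ?_
        rw [subcube_inter_subcube hyQ]
        refine ih (Q ∪ R) y fun z hz hfz => ?_
        rw [← subcube_inter_subcube hyQ] at hz
        obtain ⟨S, hSt, hS⟩ := hQ z hz.1 hfz
        refine ⟨S, Nat.le_of_lt_succ (lt_of_lt_of_le (Finset.card_lt_card ?_) hSt), hS⟩
        obtain ⟨i, hiR, hiS, hne⟩ := hR.exists_ne hS (by simp [hx, hfz])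
        have hiQ : i ∉ Q := fun hi => hne ((hxQ i hi).trans (hz.1 i hi).symm)
        refine (Finset.ssubset_iff_of_subset
          (Finset.sdiff_subset_sdiff le_rfl Finset.subset_union_left)).2 ⟨i, ?_, ?_⟩
        · simp [hiS, hiQ]
        · simp [hiR]
      obtain ⟨tree, hdepth, hcorrect⟩ := hround
      exact ⟨tree, hdepth.trans (by rw [Nat.succ_mul]; gcongr), hcorrect⟩
    · exact DecidesOn.leaf false (fun y hy hfy => hx ⟨y, hy, hfy⟩) _

theorem Dq_le_of_certificates
    (hC : ∀ x, f x ≠ none → ∃ S : Finset ι, S.card ≤ s ∧ IsCertificate f x S) :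
    Dq f ≤ s * s := by
  classical
  have hdecides : DecidesOn f (s * s) Set.univ := by
    rcases isEmpty_or_nonempty (Input ι α) with _ | ⟨⟨x₀⟩⟩
    · exact DecidesOn.leaf true (fun x => isEmptyElim x) _
    · simpa [subcube] using decidesOn_subcube (fun x hx => hC x (by simp [hx])) s ∅ x₀
        fun x _ hx => by simpa using hC x (by simp [hx])
  obtain ⟨t, ht, hcorrect⟩ := hdecides
  exact Nat.sInf_le ⟨t, ht, fun x => hcorrect x trivial⟩

variable {k : ℕ} {hk : 0 < k} {φ : Input ι α → (Fin k → Fin 2) → Bool}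

theorem IsCertifying.isCertificate_of_certFn (hφ : IsCertifying hk f φ) {x : Input ι α}
    {y : Fin k → Fin 2} (hxy : φ x y = true) {S : Finset (CertIdx ι k)}
    (hS : IsCertificate (certFn φ) (certInput x y) S) :
    IsCertificate f x (S.preimage Sum.inl Sum.inl_injective.injOn) := by
  intro x' hx'
  have hx'y : φ x' y = true := by
    have hagree : certInput x' y ∈ subcube S (certInput x y) := by
      rintro (i | j) hi
      · exact hx' i (Finset.mem_preimage.2 hi)
      · rfl
    exact (Option.some_injective _ (hS _ hagree)).trans hxy
  cases hfx : f x with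
  | none => simp [hφ.1 x y hfx] at hxy
  | some b => exact (hφ.apply_eq_some_iff hx'y b).2 ((hφ.apply_eq_some_iff hxy b).1 hfx)

theorem IsCertifying.Dq_le (hφ : IsCertifying hk f φ)
    (hC : ∀ z, ∃ S : Finset (CertIdx ι k), S.card ≤ s ∧ IsCertificate (certFn φ) z S) :
    Dq f ≤ s * s := by
  refine Dq_le_of_certificates fun x hx => ?_
  obtain ⟨b, hb⟩ := Option.ne_none_iff_exists'.1 hx
  obtain ⟨y, hxy⟩ := hφ.2.2.1 x b hb
  obtain ⟨S, hSs, hS⟩ := hC (certInput x y)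
  refine ⟨_, ?_, hφ.isCertificate_of_certFn hxy hS⟩
  exact (Finset.card_le_card_of_injOn Sum.inl (fun i hi => Finset.mem_preimage.1 hi)
    Sum.inl_injective.injOn).trans hSs

end Certificates

/-! ### Certificates from zero-error algorithms -/

section ZeroError

variable {ι : Type} {α : ι → ℕ} {f : PartialFn ι α} {p : Input ι α → PMF (Option Bool)}
  {x : Input ι α} {b : Bool}

theorem ZeroError.half_le_apply (hp : ZeroError f p) (h : f x = some b) :
    1 / 2 ≤ p x (some b) :=
  (errProb_le_iff (by rw [ENNReal.div_add_div_same, ENNReal.div_eq_one_iff] <;> norm_num)).1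
    (hp.errProb_le_half h)

theorem ZeroError.eq_some_of_mem_support (hp : ZeroError f p) (hf : TotalFn f)
    (h : some b ∈ (p x).support) : f x = some b := by
  obtain ⟨a, ha⟩ := Option.ne_none_iff_exists'.1 (hf x)
  rw [ha]
  by_contra hne
  rw [Bool.eq_not_of_ne fun hba : b = a => hne (congrArg some hba.symm)] at h
  exact (hp x a ha).1 h

theorem DTree.exists_isCertificate {L : Type} (t : DTree ι α L) (x : Input ι α) :
    ∃ S : Finset ι, S.card ≤ t.depth ∧ IsCertificate t.eval x S := by
  classical
  induction t with
  | leaf l => exact ⟨∅, by simp, fun y _ => rfl⟩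
  | node i child ih =>
    obtain ⟨S, hSd, hS⟩ := ih (x i)
    refine ⟨insert i S, (Finset.card_insert_le _ _).trans (Nat.succ_le_succ (hSd.trans
      (Finset.le_sup (f := fun a => (child a).depth) (Finset.mem_univ (x i))))), fun y hy => ?_⟩
    obtain ⟨hyi, hyS⟩ := (Finset.forall_mem_insert _ _ _).1 hy
    rw [DTree.eval, DTree.eval, hyi]
    exact hS y hyS

theorem RandRealizes.exists_isCertificate {T : ℕ} (hp : RandRealizes T p) (hpf : ZeroError f p)
    (hf : TotalFn f) (x : Input ι α) : ∃ S : Finset ι, S.card ≤ T ∧ IsCertificate f x S := by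
  obtain ⟨μ, hμ, hp⟩ := hp
  obtain ⟨b, hb⟩ := Option.ne_none_iff_exists'.1 (hf x)
  have hmem : some b ∈ (p x).support := fun h0 => by
    simpa [h0] using hpf.half_le_apply hb
  rw [hp, PMF.mem_support_map_iff] at hmem
  obtain ⟨t, ht, htx⟩ := hmem
  obtain ⟨S, hSd, hS⟩ := t.exists_isCertificate x
  refine ⟨S, hSd.trans (hμ t ht), fun y hy => ?_⟩
  rw [hb]
  refine hpf.eq_some_of_mem_support hf ?_
  rw [hp, PMF.mem_support_map_iff]
  exact ⟨t, ht, (hS y hy).trans htx⟩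

end ZeroError

/-! ### Block sensitivity -/

section BlockSensitivity

variable {ι : Type} {α : ι → ℕ} {β : Type*} {g : Input ι α → β} {x : Input ι α} {K : ℕ}

/-- The value of `g` at `x` can be changed by modifying `x` on the block `B` only. -/
def IsSensitiveBlock (g : Input ι α → β) (x : Input ι α) (B : Finset ι) : Prop :=
  ∃ y, (∀ i ∉ B, y i = x i) ∧ g y ≠ g x

/-- The block sensitivity of `g` is at most `K`. -/
def BlockSensitivityLE (g : Input ι α → β) (K : ℕ) : Prop :=
  ∀ (x : Input ι α) (𝓑 : Finset (Finset ι)), (𝓑 : Set (Finset ι)).PairwiseDisjoint id →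
    (∀ B ∈ 𝓑, IsSensitiveBlock g x B) → 𝓑.card ≤ K

theorem not_isSensitiveBlock_empty : ¬IsSensitiveBlock g x ∅ := by
  rintro ⟨y, hy, hne⟩
  exact hne (congrArg g (funext fun i => hy i (Finset.notMem_empty i)))

-- If `y` changes the value at `x` within a minimal sensitive block, then `y` is sensitive to each
-- single position of that block: resetting it leaves a change within a smaller block.
theorem BlockSensitivityLE.card_le_of_minimal (hg : BlockSensitivityLE g K) {B : Finset ι}
    (hB : Minimal (IsSensitiveBlock g x) B) : B.card ≤ K := by
  classical
  obtain ⟨y, hyB, hy⟩ := hB.prop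
  have hsingleton : ∀ i ∈ B, IsSensitiveBlock g y {i} := fun i hi => by
    refine ⟨Function.update y i (x i), fun j hj => ?_, ?_⟩
    · exact Function.update_of_ne (Finset.notMem_singleton.1 hj) _ _
    · have hreset : g (Function.update y i (x i)) = g x := by
        by_contra hne
        refine hB.not_prop_of_lt (Finset.erase_ssubset hi) ⟨_, fun j hj => ?_, hne⟩
        by_cases hji : j = i
        · rw [hji, Function.update_self]
        · rw [Function.update_of_ne hji, hyB j fun hjB => hj (Finset.mem_erase.2 ⟨hji, hjB⟩)]
      exact hreset.trans_ne hy.symm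
  rw [← Finset.card_map ⟨_, Finset.singleton_injective⟩]
  refine hg y _ ?_ (by simpa using hsingleton)
  rw [Finset.coe_map]
  rintro _ ⟨i, -, rfl⟩ _ ⟨j, -, rfl⟩ hij
  exact Finset.disjoint_singleton.2 fun h => hij (congrArg _ h)

theorem BlockSensitivityLE.exists_isCertificate [Finite ι] (hg : BlockSensitivityLE g K)
    (x : Input ι α) : ∃ S : Finset ι, S.card ≤ K * K ∧ IsCertificate g x S := by
  classical
  have := Fintype.ofFinite ι
  obtain ⟨𝓑, -, h𝓑⟩ := exists_maximal_ge_of_wellFoundedGT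
    (fun 𝓑 : Finset (Finset ι) => (𝓑 : Set (Finset ι)).PairwiseDisjoint id ∧
      ∀ B ∈ 𝓑, Minimal (IsSensitiveBlock g x) B) ∅ (by simp)
  obtain ⟨hdisj, hmin⟩ := h𝓑.prop
  refine ⟨𝓑.biUnion id, ?_, fun y hy => ?_⟩
  · refine (Finset.card_biUnion_le_card_mul _ _ K fun B hB =>
      hg.card_le_of_minimal (hmin B hB)).trans ?_
    exact Nat.mul_le_mul_right K (hg x 𝓑 hdisj fun B hB => (hmin B hB).prop)
  · by_contra hne
    have hdiff : IsSensitiveBlock g x ({i | y i ≠ x i} : Finset ι) := ⟨y, by simp, hne⟩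
    obtain ⟨B, hBy, hB⟩ := exists_minimal_le_of_wellFoundedLT _ _ hdiff
    have hdisjB : ∀ C ∈ 𝓑, Disjoint B C := fun C hC =>
      Finset.disjoint_left.2 fun i hiB hiC =>
        (Finset.mem_filter.1 (hBy hiB)).2 (hy i (Finset.mem_biUnion.2 ⟨C, hC, hiC⟩))
    have hB𝓑 : B ∈ 𝓑 := by
      refine h𝓑.le_of_ge ⟨?_, ?_⟩ (Finset.subset_insert B 𝓑) (Finset.mem_insert_self B 𝓑)
      · rw [Finset.coe_insert]
        exact hdisj.insert fun C hC _ => hdisjB C hC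
      · exact (Finset.forall_mem_insert _ _ _).2 ⟨hB, hmin⟩
    obtain rfl : B = ∅ := disjoint_self.1 (hdisjB B hB𝓑)
    exact not_isSensitiveBlock_empty hB.prop

end BlockSensitivity

/-! ### The hybrid argument -/

theorem add_sq_le_of_sq_le {a b A B t : ℝ} (ht : 0 ≤ t) (hB : 0 ≤ B) (ha : a ^ 2 ≤ A)
    (hb : b ^ 2 ≤ t * B) : (a + b) ^ 2 ≤ (t + 1) * (A + B) := by
  have hA : 0 ≤ A := (sq_nonneg a).trans ha
  have hcross : 2 * (a * b) ≤ t * A + B := by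
    refine le_of_sq_le_sq ?_ (by positivity)
    calc (2 * (a * b)) ^ 2 = 4 * (a ^ 2 * b ^ 2) := by ring
      _ ≤ 4 * (A * (t * B)) := by gcongr
      _ ≤ (t * A + B) ^ 2 := by linarith [four_mul_le_sq_add (t * A) B]
  linarith [add_sq a b]

section Hybrid

variable {ι κ τ : Type} {α : ι → ℕ} [DecidableEq ι] [Fintype κ] [Fintype τ] {q : κ → ι}
  {x y : Input ι α} {B : Finset ι} {T : ℕ}

/-- The query weight of the position `i` in the state `v`: the squared norm of the part of `v` in
which position `i` is queried. -/
noncomputable def queryWeight (q : κ → ι) (v : EuclideanSpace ℂ (Σ w, Fin (α (q w)))) (i : ι) :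
    ℝ :=
  ∑ s with q s.1 = i, ‖v s‖ ^ 2

theorem queryWeight_nonneg (v : EuclideanSpace ℂ (Σ w, Fin (α (q w)))) (i : ι) :
    0 ≤ queryWeight q v i :=
  Finset.sum_nonneg fun _ _ => sq_nonneg _

theorem sum_queryWeight (v : EuclideanSpace ℂ (Σ w, Fin (α (q w)))) (B : Finset ι) :
    ∑ i ∈ B, queryWeight q v i = ∑ s with q s.1 ∈ B, ‖v s‖ ^ 2 :=
  Finset.sum_fiberwise_eq_sum_filter _ _ _ _

theorem norm_oracleIsometry_sub_sq_le (hxy : ∀ i ∉ B, y i = x i)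
    (v : EuclideanSpace ℂ (Σ w, Fin (α (q w)))) :
    ‖oracleIsometry q x v - oracleIsometry q y v‖ ^ 2 ≤ 4 * ∑ i ∈ B, queryWeight q v i := by
  let u : EuclideanSpace ℂ (Σ w, Fin (α (q w))) :=
    WithLp.toLp 2 fun s => if q s.1 ∈ B then v s else 0
  have hu : ‖u‖ ^ 2 = ∑ i ∈ B, queryWeight q v i := by
    rw [sum_queryWeight, EuclideanSpace.norm_sq_eq, Finset.sum_filter]
    refine Finset.sum_congr rfl fun s _ => ?_
    simp only [u]
    split_ifs <;> simp
  have hvu : oracleIsometry q x v - oracleIsometry q y v =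
      oracleIsometry q x u - oracleIsometry q y u := by
    ext ⟨w, a⟩
    simp only [PiLp.sub_apply, oracleIsometry, relabel_apply, oraclePerm,
      Equiv.sigmaCongrRight_symm, Equiv.sigmaCongrRight_apply, u]
    split_ifs with hw
    · rfl
    · rw [hxy _ hw, sub_self, sub_self]
  calc ‖oracleIsometry q x v - oracleIsometry q y v‖ ^ 2
      ≤ (‖u‖ + ‖u‖) ^ 2 := by
        rw [hvu]
        gcongr
        exact (norm_sub_le _ _).trans_eq (by rw [LinearIsometry.norm_map, LinearIsometry.norm_map])
    _ = 4 * ∑ i ∈ B, queryWeight q v i := by rw [← hu]; ring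

omit [DecidableEq ι] in
theorem Prepares.exists_queryWeights [Fintype ι] {ψ : Input ι α → EuclideanSpace ℂ τ}
    (hψ : Prepares T ψ) (x : Input ι α) :
    ∃ w : ι → ℝ, (∀ i, 0 ≤ w i) ∧ ∑ i, w i ≤ T ∧ ∀ (y : Input ι α) (B : Finset ι),
      (∀ i ∉ B, y i = x i) → ‖ψ x - ψ y‖ ^ 2 ≤ T * (4 * ∑ i ∈ B, w i) := by
  classical
  induction T generalizing τ with
  | zero =>
    obtain ⟨v, -, rfl⟩ := hψ
    exact ⟨fun _ => 0, by simp, by simp, by simp⟩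
  | succ T ih =>
    obtain ⟨κ, _, q, χ, V, hχ, rfl⟩ := hψ
    obtain ⟨w, hw, hwT, hwχ⟩ := ih hχ
    refine ⟨fun i => queryWeight q (χ x) i + w i,
      fun i => add_nonneg (queryWeight_nonneg _ i) (hw i), ?_, fun y B hy => ?_⟩
    · have htotal : ∑ i, queryWeight q (χ x) i = 1 := by
        simp [sum_queryWeight, ← EuclideanSpace.norm_sq_eq, hχ.norm_eq_one]
      rw [Finset.sum_add_distrib, htotal]
      push_cast
      linarith
    · have hstep : ‖oracleIsometry q x (χ x) - oracleIsometry q y (χ y)‖ ≤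
          ‖oracleIsometry q x (χ x) - oracleIsometry q y (χ x)‖ + ‖χ x - χ y‖ := by
        rw [← (oracleIsometry q y).norm_map (χ x - χ y), map_sub]
        exact norm_sub_le_norm_sub_add_norm_sub _ _ _
      rw [← map_sub, V.norm_map, Finset.sum_add_distrib, mul_add, Nat.cast_succ]
      exact (pow_le_pow_left₀ (norm_nonneg _) hstep 2).trans <| add_sq_le_of_sq_le T.cast_nonneg
        (mul_nonneg zero_le_four (Finset.sum_nonneg fun i _ => hw i))
        (norm_oracleIsometry_sub_sq_le hy _) (hwχ y B hy)

end Hybrid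

section BlockSensitivity

variable {τ L : Type} [Fintype τ]

theorem bornPMF_map_apply_le_norm_sub_sq {u v : EuclideanSpace ℂ τ} (hu : ‖u‖ = 1) (hv : ‖v‖ = 1)
    (o : τ → L) {l : L} (hl : l ∉ ((bornPMF v hv).map o).support) :
    (bornPMF u hu).map o l ≤ ENNReal.ofReal (‖u - v‖ ^ 2) := by
  classical
  have hv0 : ∀ j, o j = l → v j = 0 := fun j hj => by
    by_contra hne
    refine hl ((PMF.mem_support_map_iff _ _ _).2 ⟨j, ?_, hj⟩)
    simpa [PMF.mem_support_iff, bornPMF_apply] using hne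
  rw [bornPMF_map_apply, EuclideanSpace.norm_sq_eq]
  refine ENNReal.ofReal_le_ofReal (Finset.sum_le_sum fun j _ => ?_)
  split_ifs with hj
  · rw [PiLp.sub_apply, hv0 j hj, sub_zero]
  · exact sq_nonneg _

theorem half_le_norm_sub_sq {u v : EuclideanSpace ℂ τ} {hu : ‖u‖ = 1} {hv : ‖v‖ = 1} {o : τ → L}
    {l : L} (hul : 1 / 2 ≤ (bornPMF u hu).map o l) (hvl : l ∉ ((bornPMF v hv).map o).support) :
    1 / 2 ≤ ‖u - v‖ ^ 2 := by
  have hdist := hul.trans (bornPMF_map_apply_le_norm_sub_sq hu hv o hvl)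
  rw [ENNReal.le_ofReal_iff_toReal_le (by simp) (by positivity)] at hdist
  simpa using hdist

theorem QuantRealizes.blockSensitivityLE {ι : Type} [Finite ι] {α : ι → ℕ} {f : PartialFn ι α}
    {p : Input ι α → PMF (Option Bool)} {T : ℕ} (hp : QuantRealizes T p) (hpf : ZeroError f p)
    (hf : TotalFn f) : BlockSensitivityLE f (8 * T ^ 2) := by
  classical
  have := Fintype.ofFinite ι
  intro x 𝓑 hdisj hsens
  obtain ⟨τ, _, ψ, hψ, o, hp⟩ := hp
  obtain ⟨w, hw, hwT, hwψ⟩ := hψ.exists_queryWeights x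
  have hfar : ∀ B ∈ 𝓑, 1 / 2 ≤ T * (4 * ∑ i ∈ B, w i) := fun B hB => by
    obtain ⟨y, hyB, hy⟩ := hsens B hB
    obtain ⟨b, hb⟩ := Option.ne_none_iff_exists'.1 (hf x)
    have hnot : some b ∉ (p y).support := fun h =>
      hy ((hpf.eq_some_of_mem_support hf h).trans hb.symm)
    have hhalf := hpf.half_le_apply hb
    rw [hp] at hnot hhalf
    exact (half_le_norm_sub_sq hhalf hnot).trans (hwψ y B hyB)
  have hcard : (𝓑.card : ℝ) * (1 / 2) ≤ 4 * T ^ 2 := calc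
    (𝓑.card : ℝ) * (1 / 2) ≤ ∑ B ∈ 𝓑, T * (4 * ∑ i ∈ B, w i) := by
      rw [← nsmul_eq_mul]
      exact Finset.card_nsmul_le_sum _ _ _ hfar
    _ = 4 * T * ∑ i ∈ 𝓑.biUnion id, w i := by
      rw [Finset.sum_biUnion hdisj, Finset.mul_sum]
      exact Finset.sum_congr rfl fun B _ => by rw [id]; ring
    _ ≤ 4 * T * T := by
      gcongr
      exact (Finset.sum_le_univ_sum_of_nonneg hw).trans hwT
    _ = 4 * T ^ 2 := by ring
  rify
  linarith

end BlockSensitivity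

/-! ### The complexity of cheat sheet functions -/

section Logarithms

theorem two_pow_clog_le_two_mul {n : ℕ} (hn : n ≠ 0) : 2 ^ Nat.clog 2 n ≤ 2 * n := by
  rcases Nat.lt_or_ge 1 n with hn1 | hn1
  · obtain ⟨l, hl⟩ := Nat.exists_eq_succ_of_ne_zero (Nat.clog_pos one_lt_two hn1).ne'
    have hlt := Nat.pow_pred_clog_lt_self one_lt_two hn1
    rw [hl, Nat.pred_succ] at hlt
    rw [hl, pow_succ']
    exact Nat.mul_le_mul_left 2 hlt.le
  · rw [Nat.clog_of_right_le_one hn1]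
    omega

theorem clog_mul_log_two_le {n : ℕ} (hn : n ≠ 0) :
    Nat.clog 2 n * Real.log 2 ≤ Real.log 2 + Real.log n := by
  rw [← Real.log_pow, ← Real.log_mul two_ne_zero (Nat.cast_ne_zero.2 hn)]
  exact Real.log_le_log (by positivity) (by exact_mod_cast two_pow_clog_le_two_mul hn)

theorem clog_le_mul_log {n : ℕ} {X : ℝ} (hX : 2 ≤ X) (hn : n ≤ (8 * X ^ 2) ^ 4) :
    Nat.clog 2 n ≤ 42 * Real.log X := by
  have hlogX : Real.log 2 ≤ Real.log X := Real.log_le_log two_pos hX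
  have hlog2 : 1 / 2 < Real.log 2 := by linarith [Real.log_two_gt_d9]
  rcases eq_or_ne n 0 with rfl | hn0
  · simp only [Nat.clog_zero_right, Nat.cast_zero]
    linarith
  have hlogn : Real.log n ≤ 12 * Real.log 2 + 8 * Real.log X := calc
    Real.log n ≤ Real.log (2 ^ 12 * X ^ 8) :=
      Real.log_le_log (by positivity) (hn.trans_eq (by ring))
    _ = 12 * Real.log 2 + 8 * Real.log X := by
      rw [Real.log_mul (by positivity) (by positivity), Real.log_pow, Real.log_pow]
      norm_cast
  have hclog : (Nat.clog 2 n : ℝ) * (1 / 2) ≤ Nat.clog 2 n * Real.log 2 := by gcongr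
  linarith [clog_mul_log_two_le hn0]

-- The factor 27 per bit of confidence is what makes this polynomial in `c`: `27 ≤ 2 ^ 5`.
theorem mul_pow_clog_le (c : ℕ) : c * 27 ^ Nat.clog 2 (6 * c) ≤ 12 ^ 5 * c ^ 6 := by
  rcases eq_or_ne c 0 with rfl | hc
  · simp
  calc c * 27 ^ Nat.clog 2 (6 * c) ≤ c * (2 ^ 5) ^ Nat.clog 2 (6 * c) := by gcongr; norm_num
    _ = c * (2 ^ Nat.clog 2 (6 * c)) ^ 5 := by rw [← pow_mul, ← pow_mul, mul_comm 5]
    _ ≤ c * (2 * (6 * c)) ^ 5 := by gcongr; exact two_pow_clog_le_two_mul (by omega)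
    _ = 12 ^ 5 * c ^ 6 := by ring

end Logarithms

section Inputs

variable {ι : Type} {α : ι → ℕ} [Nonempty (Input ι α)]

theorem nonempty_certInput (k : ℕ) : Nonempty (Input (CertIdx ι k) (certAlphabet α k)) :=
  ‹Nonempty (Input ι α)›.map fun x => certInput x fun _ => 0

theorem nonempty_cheatSheetInput (c k : ℕ) :
    Nonempty (Input (CSIdx ι c k) (csAlphabet α c k)) :=
  ‹Nonempty (Input ι α)›.map fun x => Sum.rec (fun p => x p.2) fun _ => (0 : Fin 2)

end Inputs

namespace QueryModel

variable {ι : Type} {α : ι → ℕ} {k : ℕ} {hk : 0 < k} {f : PartialFn ι α}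
  {φ : Input ι α → (Fin k → Fin 2) → Bool} {𝓜 : QueryModel}

/-- The property of a query model that makes cheat sheets small: a zero-error algorithm for a total
function yields certificates of size polynomial in its number of queries. -/
def CertificateBound (𝓜 : QueryModel) : Prop :=
  ∀ {ι : Type} [Finite ι] {α : ι → ℕ} {f : PartialFn ι α} {T : ℕ}
    {p : Input ι α → PMF (Option Bool)}, 𝓜.Realizes T p → ZeroError f p → TotalFn f →
    ∀ x, ∃ S : Finset ι, S.card ≤ (8 * T ^ 2) ^ 2 ∧ IsCertificate f x S

theorem totalFn_certFn : TotalFn (certFn φ) := fun _ => Option.some_ne_none _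

theorem CertificateBound.clog_Dq_le [Finite ι] (h𝓜 : 𝓜.CertificateBound)
    (hφ : IsCertifying hk f φ) [Nonempty (Input ι α)] {X : ℝ}
    (hX : 𝓜.zeroErrorCost (certFn φ) + 2 ≤ X) : Nat.clog 2 (Dq f) ≤ 42 * Real.log X := by
  set T := 𝓜.zeroErrorCost (certFn φ)
  have := nonempty_certInput (α := α) k
  obtain ⟨q, hq, hqφ⟩ := 𝓜.exists_realizes_zeroErrorCost (certFn φ)
  have hDT : Dq f ≤ (8 * T ^ 2) ^ 4 :=
    (hφ.Dq_le (h𝓜 hq hqφ totalFn_certFn)).trans_eq (by ring)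
  refine clog_le_mul_log (by linarith [T.cast_nonneg (α := ℝ)]) ?_
  calc (Dq f : ℝ) ≤ (8 * T ^ 2) ^ 4 := by exact_mod_cast hDT
    _ ≤ (8 * X ^ 2) ^ 4 := by gcongr; linarith

theorem oneSidedErrorCost_cheatSheet_le_pow [Finite ι] [Nonempty (Input ι α)] (𝓜 : QueryModel)
    (hφ : IsCertifying hk f φ) (c : ℕ) :
    𝓜.oneSidedErrorCost (cheatSheet c f φ) ≤
      12 ^ 5 * c ^ 6 * (𝓜.boundedErrorCost f + 𝓜.zeroErrorCost (certFn φ) + 1) := by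
  have := nonempty_certInput (α := α) k
  have := nonempty_cheatSheetInput (α := α) c k
  obtain ⟨p, hp, hpf⟩ := 𝓜.exists_realizes_boundedErrorCost f
  obtain ⟨q, hq, hqφ⟩ := 𝓜.exists_realizes_zeroErrorCost (certFn φ)
  set S := 𝓜.boundedErrorCost f
  set T := 𝓜.zeroErrorCost (certFn φ)
  set m := Nat.clog 2 (6 * c)
  obtain ⟨a, ha, haf⟩ :=
    exists_cheatSheet_algorithm hφ hp hpf hq hqφ (Nat.le_pow_clog one_lt_two (6 * c))
  have hm : m ≤ 27 ^ m := (Nat.lt_pow_self (by norm_num)).le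
  have hm1 : 1 ≤ 27 ^ m := Nat.one_le_pow _ _ (by norm_num)
  calc 𝓜.oneSidedErrorCost (cheatSheet c f φ)
      ≤ c * (27 ^ m * S) + c * (1 + m * T) := Nat.sInf_le ⟨a, ha, haf⟩
    _ ≤ c * (27 ^ m * S) + c * (27 ^ m + 27 ^ m * T) := by gcongr
    _ = c * 27 ^ m * (S + T + 1) := by ring
    _ ≤ 12 ^ 5 * c ^ 6 * (S + T + 1) := Nat.mul_le_mul_right _ (mul_pow_clog_le c)

theorem CertificateBound.oneSidedErrorCost_cheatSheet_le [Finite ι] [Nonempty (Input ι α)]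
    (h𝓜 : 𝓜.CertificateBound) (hφ : IsCertifying hk f φ) :
    (𝓜.oneSidedErrorCost (cheatSheet (10 * Nat.clog 2 (Dq f)) f φ) : ℝ) ≤
      12 ^ 5 * 420 ^ 6 * ((𝓜.boundedErrorCost f : ℝ) + 𝓜.zeroErrorCost (certFn φ) + 2) *
        Real.log ((𝓜.boundedErrorCost f : ℝ) + 𝓜.zeroErrorCost (certFn φ) + 2) ^ 6 := by
  have hcost := 𝓜.oneSidedErrorCost_cheatSheet_le_pow hφ (10 * Nat.clog 2 (Dq f))
  have hclog := h𝓜.clog_Dq_le hφ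
    (X := 𝓜.boundedErrorCost f + 𝓜.zeroErrorCost (certFn φ) + 2) (by simp)
  generalize 𝓜.boundedErrorCost f = S, 𝓜.zeroErrorCost (certFn φ) = T, Nat.clog 2 (Dq f) = l at *
  calc (𝓜.oneSidedErrorCost (cheatSheet (10 * l) f φ) : ℝ)
    _ ≤ 12 ^ 5 * (10 * l) ^ 6 * (S + T + 1) := by exact_mod_cast hcost
    _ ≤ 12 ^ 5 * (10 * (42 * Real.log (S + T + 2))) ^ 6 * (S + T + 2) := by
      gcongr
      norm_num
    _ = 12 ^ 5 * 420 ^ 6 * (S + T + 2) * Real.log (S + T + 2) ^ 6 := by ring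

end QueryModel

section Bounds

variable {ι : Type} {α : ι → ℕ} {k : ℕ} {hk : 0 < k} {f : PartialFn ι α}
  {φ : Input ι α → (Fin k → Fin 2) → Bool}

theorem Dq_of_subsingleton [Subsingleton (Input ι α)] (f : PartialFn ι α) : Dq f = 0 := by
  obtain ⟨o, ho⟩ : ∃ o, ∀ x, f x = o := by
    rcases isEmpty_or_nonempty (Input ι α) with _ | ⟨⟨x⟩⟩
    · exact ⟨none, isEmptyElim⟩
    · exact ⟨f x, fun y => congrArg f (Subsingleton.elim y x)⟩
  exact Nat.le_zero.1 (Nat.sInf_le ⟨.leaf o, le_rfl, fun x b hb => (ho x).symm.trans hb⟩)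

theorem R1q_of_isEmpty [IsEmpty ι] (f : PartialFn ι α) : R1q f = 0 := by
  rw [← oneSidedErrorCost_randModel]
  refine Nat.le_zero.1 (Nat.sInf_le ⟨_, randModel.pure (f isEmptyElim), fun x hx => ?_,
    fun x hx => ?_⟩)
  all_goals rw [Subsingleton.elim isEmptyElim x, hx]
  · simp
  · simp

-- Without positions to query there is no register, and so not even a zero-query algorithm.
theorem Q1q_of_isEmpty [IsEmpty ι] [Fintype ι] [DecidableEq ι] (f : PartialFn ι α) :
    Q1q f = 0 := by
  refine Nat.sInf_eq_zero.2 (Or.inr (Set.eq_empty_of_forall_notMem ?_))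
  rintro d ⟨A, -⟩
  simpa using A.init_norm

theorem certificateBound_randModel : randModel.CertificateBound := by
  intro _ _ _ _ T _ hp hpf hf x
  obtain ⟨S, hST, hS⟩ := RandRealizes.exists_isCertificate hp hpf hf x
  refine ⟨S, hST.trans ?_, hS⟩
  calc T ≤ T ^ 4 := Nat.le_self_pow four_ne_zero T
    _ ≤ 64 * T ^ 4 := Nat.le_mul_of_pos_left _ (by norm_num)
    _ = (8 * T ^ 2) ^ 2 := by ring

theorem certificateBound_quantModel : quantModel.CertificateBound := fun hp hpf hf x => by
  simpa only [sq] using (QuantRealizes.blockSensitivityLE hp hpf hf).exists_isCertificate x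

theorem R1q_cheatSheet_le [Finite ι] (hφ : IsCertifying hk f φ) :
    (R1q (cheatSheet (10 * Nat.clog 2 (Dq f)) f φ) : ℝ) ≤
      12 ^ 5 * 420 ^ 6 * ((Rq f : ℝ) + R0q (certFn φ) + 2) *
        Real.log ((Rq f : ℝ) + R0q (certFn φ) + 2) ^ 6 := by
  rcases isEmpty_or_nonempty (Input ι α) with _ | _
  · rw [Dq_of_subsingleton, Nat.clog_zero_right, mul_zero, R1q_of_isEmpty, Nat.cast_zero]
    positivity
  · simp only [← oneSidedErrorCost_randModel, ← boundedErrorCost_randModel,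
      ← zeroErrorCost_randModel]
    exact certificateBound_randModel.oneSidedErrorCost_cheatSheet_le hφ

theorem Q1q_cheatSheet_le [Fintype ι] [DecidableEq ι] (hφ : IsCertifying hk f φ) :
    (Q1q (cheatSheet (10 * Nat.clog 2 (Dq f)) f φ) : ℝ) ≤
      12 ^ 5 * 420 ^ 6 * ((Qq f : ℝ) + Q0q (certFn φ) + 2) *
        Real.log ((Qq f : ℝ) + Q0q (certFn φ) + 2) ^ 6 := by
  rcases Nat.eq_zero_or_pos (10 * Nat.clog 2 (Dq f)) with hc | hc
  · rw [hc, Q1q_of_isEmpty, Nat.cast_zero]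
    positivity
  · obtain ⟨x, y, hxy⟩ : Nontrivial (Input ι α) := not_subsingleton_iff_nontrivial.1 fun _ => by
      simp [Dq_of_subsingleton] at hc
    obtain ⟨i, -⟩ := Function.ne_iff.1 hxy
    have : Nonempty (Input ι α) := ⟨x⟩
    have : Nonempty (Σ i, Fin (α i)) := ⟨i, x i⟩
    have : Nonempty (Σ i, Fin (certAlphabet α k i)) := ⟨.inl i, x i⟩
    have : Nonempty (Σ i, Fin (csAlphabet α (10 * Nat.clog 2 (Dq f)) k i)) :=
      ⟨.inl (⟨0, hc⟩, i), x i⟩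
    simp only [← oneSidedErrorCost_quantModel, ← boundedErrorCost_quantModel,
      ← zeroErrorCost_quantModel]
    exact certificateBound_quantModel.oneSidedErrorCost_cheatSheet_le hφ

end Bounds

end QC

theorem cheat_sheet_one_sided_upper_bounds_general {ι : Type} [Fintype ι] [DecidableEq ι]
    {α : ι → ℕ} {k : ℕ} {hk : 0 < k} {f : QC.PartialFn ι α}
    {φ : QC.Input ι α → (Fin k → Fin 2) → Bool} (hφ : QC.IsCertifying hk f φ) :
    (QC.R1q (QC.cheatSheet (10 * Nat.clog 2 (QC.Dq f)) f φ) : ℝ) ≤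
        12 ^ 5 * 420 ^ 6 * ((QC.Rq f : ℝ) + QC.R0q (QC.certFn φ) + 2) *
          Real.log ((QC.Rq f : ℝ) + QC.R0q (QC.certFn φ) + 2) ^ 6 ∧
    (QC.Q1q (QC.cheatSheet (10 * Nat.clog 2 (QC.Dq f)) f φ) : ℝ) ≤
        12 ^ 5 * 420 ^ 6 * ((QC.Qq f : ℝ) + QC.Q0q (QC.certFn φ) + 2) *
          Real.log ((QC.Qq f : ℝ) + QC.Q0q (QC.certFn φ) + 2) ^ 6 :=
  ⟨QC.R1q_cheatSheet_le hφ, QC.Q1q_cheatSheet_le hφ⟩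

/-- One-sided-error upper bounds for cheat sheet functions:
`R₁(f_CS) = Õ(R(f) + R₀(φ))` and `Q₁(f_CS) = Õ(Q(f) + Q₀(φ))`. -/
theorem cheat_sheet_one_sided_upper_bounds :
    ∃ (C : ℝ) (e : ℕ), 0 < C ∧ ∀ (n M k : ℕ) (hk : 0 < k)
      (f : QC.PartialFn (Fin n) fun _ => M)
      (φ : QC.Input (Fin n) (fun _ => M) → (Fin k → Fin 2) → Bool),
      QC.IsCertifying hk f φ →
      (QC.R1q (QC.cheatSheet (10 * Nat.clog 2 (QC.Dq f)) f φ) : ℝ) ≤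
          C * ((QC.Rq f : ℝ) + (QC.R0q (QC.certFn φ) : ℝ) + 2) *
            (Real.log ((QC.Rq f : ℝ) + (QC.R0q (QC.certFn φ) : ℝ) + 2)) ^ e ∧
      (QC.Q1q (QC.cheatSheet (10 * Nat.clog 2 (QC.Dq f)) f φ) : ℝ) ≤
          C * ((QC.Qq f : ℝ) + (QC.Q0q (QC.certFn φ) : ℝ) + 2) *
            (Real.log ((QC.Qq f : ℝ) + (QC.Q0q (QC.certFn φ) : ℝ) + 2)) ^ e := by
  refine ⟨12 ^ 5 * 420 ^ 6, 6, by norm_num, fun n M k hk f φ hφ => ?_⟩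
  exact cheat_sheet_one_sided_upper_bounds_general hφ
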